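/- arXiv:2504.15775 — 2 statements merged into one kernel-verified Lean document; each statement's English description precedes it below -/
import Mathlib

section
/- Let R be a ring in which every minimal right ideal is an almost injective right R-module. Then every mininjective right R-module is injective if and only if R is a right Artinian serial ring with J(R)² = 0, where J(R) is the Jacobson radical of R. -/
universe u v w v'

open MulOpposite

section RightDefs
variable (R : Type u) [Ring R]

/-- A right `R`-module (i.e. an `Rᵐᵒᵖ`-module) `M` is mininjective if every homomorphism
from a minimal right ideal `I` of `R` into `M` extends to a homomorphism `R → M`. -/
def IsMininjective (M : Type v) [AddCommGroup M] [Module Rᵐᵒᵖ M] : Prop :=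
  ∀ I : Submodule Rᵐᵒᵖ R, IsAtom I → ∀ f : ↥I →ₗ[Rᵐᵒᵖ] M,
    ∃ g : R →ₗ[Rᵐᵒᵖ] M, ∀ x : ↥I, g ↑x = f x

/-- A right `R`-module `M` is min-projective if every short exact sequence
`0 → N → X → M → 0` with `N` mininjective splits (equivalently `Ext¹(M, N) = 0`
for every mininjective `N`). -/
def IsMinProjective (M : Type v) [AddCommGroup M] [Module Rᵐᵒᵖ M] : Prop :=
  ∀ (X : Type (max u v)) [AddCommGroup X] [Module Rᵐᵒᵖ X] (p : X →ₗ[Rᵐᵒᵖ] M),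
    Function.Surjective p → IsMininjective R ↥(LinearMap.ker p) →
      ∃ s : M →ₗ[Rᵐᵒᵖ] X, p ∘ₗ s = LinearMap.id

/-- `R` is right strongly min-coherent if every minimal right ideal of `R` is min-projective. -/
def RightStronglyMinCoherent : Prop :=
  ∀ I : Submodule Rᵐᵒᵖ R, IsAtom I → IsMinProjective R ↥I

/-- `R` is a right quasi V-ring if every simple right `R`-module which is not isomorphic to
any right ideal of `R` is injective. -/
def RightQuasiVRing : Prop :=
  ∀ (S : Type v) [AddCommGroup S] [Module Rᵐᵒᵖ S], IsSimpleModule Rᵐᵒᵖ S →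
    (¬ ∃ I : Submodule Rᵐᵒᵖ R, Nonempty (S ≃ₗ[Rᵐᵒᵖ] ↥I)) → Module.Injective Rᵐᵒᵖ S

/-- `R` is a right GV-ring if every simple right `R`-module is injective or projective. -/
def RightGVRing : Prop :=
  ∀ (S : Type v) [AddCommGroup S] [Module Rᵐᵒᵖ S], IsSimpleModule Rᵐᵒᵖ S →
    Module.Injective Rᵐᵒᵖ S ∨ Module.Projective Rᵐᵒᵖ S

/-- `R` is right Kasch if every simple right `R`-module is isomorphic to a right ideal of `R`. -/
def RightKasch : Prop :=
  ∀ (S : Type v) [AddCommGroup S] [Module Rᵐᵒᵖ S], IsSimpleModule Rᵐᵒᵖ S →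
    ∃ I : Submodule Rᵐᵒᵖ R, Nonempty (S ≃ₗ[Rᵐᵒᵖ] ↥I)

/-- A right `R`-module `M` is almost injective if for every monomorphism `i : A → B` and
every `f : A → M`, either `f` extends to `B`, or there are a nonzero direct summand `D` of
`B` (with projection `π : B → D`) and `h : M → D` with `h ∘ f = π ∘ i`. -/
def IsAlmostInjective (M : Type v) [AddCommGroup M] [Module Rᵐᵒᵖ M] : Prop :=
  ∀ (A B : Type w) [AddCommGroup A] [AddCommGroup B] [Module Rᵐᵒᵖ A] [Module Rᵐᵒᵖ B]
    (i : A →ₗ[Rᵐᵒᵖ] B), Function.Injective i → ∀ f : A →ₗ[Rᵐᵒᵖ] M,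
    (∃ g : B →ₗ[Rᵐᵒᵖ] M, g ∘ₗ i = f) ∨
    (∃ D : Submodule Rᵐᵒᵖ B, D ≠ ⊥ ∧ ∃ π : B →ₗ[Rᵐᵒᵖ] ↥D,
      π ∘ₗ D.subtype = LinearMap.id ∧ ∃ h : M →ₗ[Rᵐᵒᵖ] ↥D, h ∘ₗ f = π ∘ₗ i)

/-- `R` is a right almost V-ring if every simple right `R`-module is almost injective. -/
def RightAlmostVRing : Prop :=
  ∀ (S : Type v) [AddCommGroup S] [Module Rᵐᵒᵖ S], IsSimpleModule Rᵐᵒᵖ S →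
    IsAlmostInjective.{u, v, w} R S

/-- `R` is right serial if `R`, as a right `R`-module, is an internal direct sum of finitely
many uniserial submodules. -/
def RightSerial : Prop :=
  ∃ (n : ℕ) (c : Fin n → Submodule Rᵐᵒᵖ R), DirectSum.IsInternal c ∧
    ∀ i, ∀ N P : Submodule Rᵐᵒᵖ ↥(c i), N ≤ P ∨ P ≤ N

/-- `R` is left serial if `R`, as a left `R`-module, is an internal direct sum of finitely
many uniserial submodules. -/
def LeftSerial : Prop :=
  ∃ (n : ℕ) (c : Fin n → Submodule R R), DirectSum.IsInternal c ∧
    ∀ i, ∀ N P : Submodule R ↥(c i), N ≤ P ∨ P ≤ N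

/-- The square of the Jacobson radical of `R` is zero. -/
def JacobsonSquareZero : Prop :=
  ∀ x ∈ (⊥ : TwoSidedIdeal R).jacobson, ∀ y ∈ (⊥ : TwoSidedIdeal R).jacobson, x * y = 0

end RightDefs

section PartA

theorem exists_idem_semisimple (S : Type u) [Ring S] [IsSemisimpleRing S] :
    ∃ (n : ℕ) (e : Fin n → S), CompleteOrthogonalIdempotents e ∧ (∀ i, e i ≠ 0) ∧
      ∀ i x, x * e i ≠ 0 → ∃ s, s * (x * e i) = e i := by
  obtain ⟨n, V, φ, hs⟩ := IsSemisimpleModule.exists_linearEquiv_fin_dfinsupp S S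
  have hmul : ∀ (i : Fin n) (x : S),
      x * φ.symm (DFinsupp.single i (φ 1 i)) = φ.symm (DFinsupp.single i (φ x i)) := by
    intro i x
    rw [← smul_eq_mul, ← map_smul, ← DFinsupp.single_smul, ← DFinsupp.smul_apply, ← map_smul,
      smul_eq_mul, mul_one]
  refine ⟨n, fun i => φ.symm (DFinsupp.single i (φ 1 i)), ?_, ?_, ?_⟩
  · refine ⟨⟨?_, ?_⟩, ?_⟩
    · intro i
      show _ * _ = _
      rw [hmul]; simp
    · intro i j hij
      show _ * _ = _
      rw [hmul]; simp [DFinsupp.single_apply, hij]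
    · rw [← map_sum]
      apply φ.injective
      rw [LinearEquiv.apply_symm_apply]
      ext i
      simp [DFinsupp.single_apply]
  · intro i h
    have h0 : φ 1 i = 0 := by simpa using h
    have := hs i
    have := IsSimpleModule.nontrivial S (V i)
    obtain ⟨v, hv⟩ := exists_ne (0 : V i)
    apply hv
    have h1 : φ.symm (DFinsupp.single i v) * φ.symm (DFinsupp.single i (φ 1 i)) = 0 := by
      rw [h0]; simp
    rw [hmul] at h1
    simpa using h1
  · intro i x hx
    rw [hmul] at hx
    have := hs i
    have hne : φ x i ≠ 0 := fun h => hx (by rw [h]; simp)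
    obtain ⟨s, hs'⟩ := IsSimpleModule.toSpanSingleton_surjective S hne (φ 1 i)
    refine ⟨s, ?_⟩
    simp only [hmul]
    simp only [LinearMap.toSpanSingleton_apply] at hs'
    rw [← smul_eq_mul, ← map_smul, ← DFinsupp.single_smul, hs']

theorem isUnit_one_add_of_mem_jacobson {S : Type u} [Ring S] {x : S} (hx : x ∈ Ring.jacobson S) :
    IsUnit (1 + x) := by
  have key : ∀ y ∈ Ring.jacobson S, ∃ z, z * (1 + y) = 1 := by
    intro y hy
    rw [← Ideal.jacobson_bot, Ideal.mem_jacobson_iff] at hy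
    obtain ⟨z, hz⟩ := hy 1
    refine ⟨z, ?_⟩
    rw [Ideal.mem_bot, sub_eq_zero] at hz
    have h2 : z * (1 + y) = z * 1 * y + z := by noncomm_ring
    rw [h2, hz]
  obtain ⟨z, hz⟩ := key x hx
  obtain ⟨w, hw⟩ := key (-(z * x)) (neg_mem (Ideal.mul_mem_left _ _ hx))
  have h1 : 1 + -(z * x) = z := by rw [← hz]; noncomm_ring
  rw [h1] at hw
  have hw' : w = 1 + x := by
    calc w = w * (z * (1 + x)) := by rw [hz, mul_one]
      _ = 1 + x := by rw [← mul_assoc, hw, one_mul]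
  rw [hw'] at hw
  exact ⟨⟨1 + x, z, hw, hz⟩, rfl⟩

theorem op_mem_jacobson {S : Type u} [Ring S] {x : S} (hx : x ∈ Ring.jacobson S) :
    op x ∈ Ring.jacobson Sᵐᵒᵖ := by
  rw [← Ideal.jacobson_bot, Ideal.mem_jacobson_iff]
  intro y
  obtain ⟨u, hu⟩ := isUnit_one_add_of_mem_jacobson (Ideal.mul_mem_right (unop y) _ hx)
  refine ⟨op (↑u⁻¹ : S), ?_⟩
  rw [Ideal.mem_bot, sub_eq_zero]
  apply unop_injective
  simp only [unop_add, unop_mul, unop_op, unop_one]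
  have : x * unop y = u - 1 := by rw [hu]; simp
  rw [← mul_assoc, this, sub_mul]; simp

theorem mem_J_iff {R : Type u} [Ring R] {x : R} :
    x ∈ (⊥ : TwoSidedIdeal R).jacobson ↔ op x ∈ Ring.jacobson Rᵐᵒᵖ := by
  have h1 : x ∈ (⊥ : TwoSidedIdeal R).jacobson ↔ x ∈ Ring.jacobson R := by
    rw [← Ideal.jacobson_bot, TwoSidedIdeal.mem_jacobson_iff, Ideal.mem_jacobson_iff]
    simp [TwoSidedIdeal.mem_bot]
  rw [h1]
  refine ⟨op_mem_jacobson, fun h => ?_⟩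
  have h2 := op_mem_jacobson h
  rw [← Ideal.jacobson_bot, Ideal.mem_jacobson_iff] at h2 ⊢
  intro y
  obtain ⟨z, hz⟩ := h2 (op (op y))
  refine ⟨unop (unop z), ?_⟩
  rw [Ideal.mem_bot] at hz ⊢
  have := congrArg (fun t => unop (unop t)) hz
  simpa using this

theorem exists_idem_op (S : Type u) [Ring S] [IsArtinianRing S] :
    ∃ (n : ℕ) (e : Fin n → S), CompleteOrthogonalIdempotents e ∧
      (∀ i, e i ∉ Ring.jacobson S) ∧
      ∀ i x, x * e i ∉ Ring.jacobson S → ∃ s, s * (x * e i) = e i := by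
  obtain ⟨n, e, he, hne, hs⟩ := exists_idem_semisimple (S ⧸ Ring.jacobson S)
  obtain ⟨e', h1, h2⟩ := CompleteOrthogonalIdempotents.lift_of_isNilpotent_ker
    (Ideal.Quotient.mk (Ring.jacobson S)) (by
      intro x hx
      rw [Ideal.mk_ker] at hx
      obtain ⟨k, hk⟩ := IsSemiprimaryRing.isNilpotent (R := S)
      refine ⟨k, ?_⟩
      have := Ideal.pow_mem_pow hx k
      rw [hk] at this
      exact this) he (fun i => Ideal.Quotient.mk_surjective _)
  have h3 : ∀ i, Ideal.Quotient.mk (Ring.jacobson S) (e' i) = e i := fun i => congrFun h2 i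
  refine ⟨n, e', h1, ?_, ?_⟩
  · intro i hi
    apply hne i
    rw [← h3]; exact Ideal.Quotient.eq_zero_iff_mem.mpr hi
  · intro i x hx
    obtain ⟨s, hs'⟩ := hs i (Ideal.Quotient.mk _ x) (by
      rw [← h3, ← map_mul]
      intro h; exact hx (Ideal.Quotient.eq_zero_iff_mem.mp h))
    obtain ⟨s, rfl⟩ := Ideal.Quotient.mk_surjective s
    rw [← h3, ← map_mul, ← map_mul, Ideal.Quotient.eq] at hs'
    obtain ⟨u, hu⟩ := isUnit_one_add_of_mem_jacobson hs'
    refine ⟨↑u⁻¹ * s, ?_⟩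
    have h4 : (u : S) * e' i = s * (x * e' i) := by
      rw [hu]
      have := (h1.idem i).eq
      simp only [add_mul, sub_mul, mul_assoc, this, one_mul]
      noncomm_ring
    rw [mul_assoc, ← h4, ← mul_assoc]; simp

/-- local decomposition data of a right artinian ring -/
theorem exists_idem_right (R : Type u) [Ring R] (h : IsArtinian Rᵐᵒᵖ R) :
    ∃ (n : ℕ) (e : Fin n → R), CompleteOrthogonalIdempotents e ∧
      (∀ i, e i ∉ (⊥ : TwoSidedIdeal R).jacobson) ∧
      ∀ i x, e i * x ∉ (⊥ : TwoSidedIdeal R).jacobson → ∃ s, e i * x * s = e i := by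
  have : IsArtinianRing Rᵐᵒᵖ := by
    let φ : R ≃ₗ[Rᵐᵒᵖ] Rᵐᵒᵖ :=
      { opAddEquiv with map_smul' := fun r x => by simp }
    exact (LinearEquiv.isArtinian_iff φ).mp h
  obtain ⟨n, e, h1, h2, h3⟩ := exists_idem_op Rᵐᵒᵖ
  refine ⟨n, fun i => unop (e i), ?_, ?_, ?_⟩
  · refine ⟨⟨fun i => ?_, fun i j hij => ?_⟩, ?_⟩
    · exact congrArg unop (h1.idem i)
    · exact congrArg unop (h1.ortho hij.symm)
    · have := congrArg unop h1.complete
      simpa [Finset.unop_sum] using this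
  · intro i
    rw [mem_J_iff]; exact h2 i
  · intro i x hx
    rw [mem_J_iff] at hx
    obtain ⟨s, hs⟩ := h3 i (op x) hx
    exact ⟨unop s, congrArg unop hs⟩

theorem J_nilpotent (R : Type u) [Ring R] (h : IsArtinian Rᵐᵒᵖ R) (x : R)
    (hx : x ∈ (⊥ : TwoSidedIdeal R).jacobson) : IsNilpotent x := by
  have : IsArtinianRing Rᵐᵒᵖ := by
    let φ : R ≃ₗ[Rᵐᵒᵖ] Rᵐᵒᵖ :=
      { opAddEquiv with map_smul' := fun r x => by simp }
    exact (LinearEquiv.isArtinian_iff φ).mp h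
  obtain ⟨k, hk⟩ := IsSemiprimaryRing.isNilpotent (R := Rᵐᵒᵖ)
  refine ⟨k, ?_⟩
  rw [mem_J_iff] at hx
  have := Ideal.pow_mem_pow hx k
  rw [hk] at this
  have h2 : (op x) ^ k = 0 := this
  rw [← op_pow] at h2
  exact (op_eq_zero_iff _).mp h2

theorem simple_smul_J {R : Type u} [Ring R] {T : Type u} [AddCommGroup T] [Module Rᵐᵒᵖ T]
    [IsSimpleModule Rᵐᵒᵖ T] {x : R} (hx : x ∈ (⊥ : TwoSidedIdeal R).jacobson) (t : T) :
    op x • t = 0 := by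
  rw [mem_J_iff] at hx
  exact Module.mem_annihilator.mp (IsSemisimpleModule.jacobson_le_annihilator Rᵐᵒᵖ T hx) t

end PartA


section PartB

theorem almostInjective_congr {R : Type u} [Ring R] {M N : Type u} [AddCommGroup M]
    [Module Rᵐᵒᵖ M] [AddCommGroup N] [Module Rᵐᵒᵖ N] (φ : M ≃ₗ[Rᵐᵒᵖ] N)
    (h : IsAlmostInjective.{u, u, u} R M) : IsAlmostInjective.{u, u, u} R N := by
  intro A B _ _ _ _ i hi f
  rcases h A B i hi (φ.symm.toLinearMap ∘ₗ f) with ⟨g, hg⟩ | ⟨D, hD, π, hπ, k, hk⟩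
  · refine Or.inl ⟨φ.toLinearMap ∘ₗ g, ?_⟩
    ext a
    have := LinearMap.congr_fun hg a
    simp only [LinearMap.comp_apply] at this ⊢
    rw [this]; simp
  · refine Or.inr ⟨D, hD, π, hπ, k ∘ₗ φ.symm.toLinearMap, ?_⟩
    rw [LinearMap.comp_assoc]; exact hk

variable {R : Type u} [Ring R]

theorem simple_almostInjective
    (hmin : ∀ I : Submodule Rᵐᵒᵖ R, IsAtom I → IsAlmostInjective.{u, u, u} R ↥I)
    (hinj : ∀ (M : Type u) [AddCommGroup M] [Module Rᵐᵒᵖ M],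
        IsMininjective R M → Module.Injective Rᵐᵒᵖ M)
    (T : Type u) [AddCommGroup T] [Module Rᵐᵒᵖ T] [IsSimpleModule Rᵐᵒᵖ T] :
    IsAlmostInjective.{u, u, u} R T := by
  by_cases h : ∃ I : Submodule Rᵐᵒᵖ R, IsAtom I ∧ ∃ f : ↥I →ₗ[Rᵐᵒᵖ] T, f ≠ 0
  · obtain ⟨I, hI, f, hf⟩ := h
    have := isSimpleModule_iff_isAtom.mpr hI
    exact almostInjective_congr (LinearEquiv.ofBijective f (LinearMap.bijective_of_ne_zero hf))
      (hmin I hI)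
  · push Not at h
    have hT : Module.Injective Rᵐᵒᵖ T := hinj T (by
      intro I hI f
      refine ⟨0, fun x => ?_⟩
      rw [h I hI f]; simp)
    intro A B _ _ _ _ i hi f
    obtain ⟨g, hg⟩ := hT.out i hi f
    exact Or.inl ⟨g, LinearMap.ext hg⟩

theorem exists_atom_of_nontrivial
    (hinj : ∀ (M : Type u) [AddCommGroup M] [Module Rᵐᵒᵖ M],
        IsMininjective R M → Module.Injective Rᵐᵒᵖ M)
    (M : Type u) [AddCommGroup M] [Module Rᵐᵒᵖ M] [Nontrivial M] :
    ∃ N : Submodule Rᵐᵒᵖ M, IsAtom N := by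
  by_contra hno
  push Not at hno
  have hN : ∀ N : Submodule Rᵐᵒᵖ M, Module.Injective Rᵐᵒᵖ N := by
    intro N
    apply hinj
    intro I hI f
    have := isSimpleModule_iff_isAtom.mpr hI
    rcases LinearMap.injective_or_eq_zero f with hf | hf
    · exfalso
      have e := LinearEquiv.ofInjective (N.subtype ∘ₗ f)
        (N.injective_subtype.comp hf)
      have := IsSimpleModule.congr e.symm
      exact hno _ (isSimpleModule_iff_isAtom.mp this)
    · exact ⟨0, fun x => by rw [hf]; simp⟩
  have hss : IsSemisimpleModule Rᵐᵒᵖ M := by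
    refine (isSemisimpleModule_iff _ _).mpr ⟨fun N => ?_⟩
    obtain ⟨g, hg⟩ := (hN N).out N.subtype N.injective_subtype LinearMap.id
    exact ⟨_, LinearMap.isCompl_of_proj hg⟩
  obtain ⟨m, hm⟩ := IsSemisimpleModule.exists_simple_submodule Rᵐᵒᵖ M
  exact hno m (isSimpleModule_iff_isAtom.mp hm)

theorem exists_injective_embedding (S : Type u) [Ring S] (M : Type u) [AddCommGroup M]
    [Module S M] : ∃ (E : Type u) (_ : AddCommGroup E) (_ : Module S E) (f : M →ₗ[S] E),
      Module.Injective S E ∧ Function.Injective f := by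
  let E := CategoryTheory.Injective.under (ModuleCat.of S M)
  refine ⟨E, inferInstance, inferInstance, (CategoryTheory.Injective.ι (ModuleCat.of S M)).hom,
    ?_, ?_⟩
  · have h : CategoryTheory.Injective E := CategoryTheory.Injective.injective_under _
    exact Module.injective_module_of_injective_object (inj := h) ..
  · exact (ModuleCat.mono_iff_injective _).mp inferInstance

theorem isNoetherian_of_hinj
    (hinj : ∀ (M : Type u) [AddCommGroup M] [Module Rᵐᵒᵖ M],
        IsMininjective R M → Module.Injective Rᵐᵒᵖ M) : IsNoetherian Rᵐᵒᵖ R := by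
  rw [← monotone_stabilizes_iff_noetherian]
  intro I
  choose E i1 i2 φ hE hφ using fun n => exists_injective_embedding Rᵐᵒᵖ (R ⧸ I n)
  let M : Submodule Rᵐᵒᵖ (∀ n, E n) :=
    { carrier := {f | ∃ N, ∀ n, N ≤ n → f n = 0}
      add_mem' := by
        rintro a b ⟨N, hN⟩ ⟨N', hN'⟩
        refine ⟨max N N', fun n hn => ?_⟩
        simp [hN n (le_trans (le_max_left _ _) hn), hN' n (le_trans (le_max_right _ _) hn)]
      zero_mem' := ⟨0, fun _ _ => rfl⟩
      smul_mem' := by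
        rintro c a ⟨N, hN⟩
        exact ⟨N, fun n hn => by simp [hN n hn]⟩ }
  have hM : Module.Injective Rᵐᵒᵖ M := by
    apply hinj
    intro K hK f
    have hs := isSimpleModule_iff_isAtom.mpr hK
    have := IsSimpleModule.nontrivial Rᵐᵒᵖ K
    obtain ⟨x, hx⟩ := exists_ne (0 : K)
    obtain ⟨N, hN⟩ := (f x).2
    have hz : ∀ n, N ≤ n → ∀ y : K, (f y : ∀ n, E n) n = 0 := by
      intro n hn y
      obtain ⟨r, rfl⟩ := IsSimpleModule.toSpanSingleton_surjective Rᵐᵒᵖ hx y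
      simp [hN n hn]
    have hex : ∀ n, ∃ g : R →ₗ[Rᵐᵒᵖ] E n, ∀ y : K, g y = (f y : ∀ n, E n) n := fun n =>
      (hE n).out K.subtype K.injective_subtype (LinearMap.proj n ∘ₗ M.subtype ∘ₗ f)
    choose g hg using hex
    let G : R →ₗ[Rᵐᵒᵖ] (∀ n, E n) := LinearMap.pi fun n => if N ≤ n then 0 else g n
    have hG : ∀ r, G r ∈ M := fun r => ⟨N, fun n hn => by simp [G, hn]⟩
    refine ⟨LinearMap.codRestrict M G hG, fun y => ?_⟩
    apply Subtype.ext
    funext n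
    by_cases hn : N ≤ n
    · simp [G, hn, hz n hn y]
    · simp [G, hn, hg]
  let U : Submodule Rᵐᵒᵖ R := ⨆ n, I n
  have hU : ∀ x, x ∈ U ↔ ∃ n, x ∈ I n := fun x =>
    Submodule.mem_iSup_of_directed _ I.monotone.directed_le
  let F : R →ₗ[Rᵐᵒᵖ] (∀ n, E n) := LinearMap.pi fun n => φ n ∘ₗ (I n).mkQ
  have hF : ∀ n r, F r n = 0 ↔ r ∈ I n := by
    intro n r
    have : F r n = φ n ((I n).mkQ r) := rfl
    rw [this, map_eq_zero_iff _ (hφ n)]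
    simp
  let F' : U →ₗ[Rᵐᵒᵖ] M := LinearMap.codRestrict M (F ∘ₗ U.subtype) (by
    intro x
    obtain ⟨N, hN⟩ := (hU x).mp x.2
    exact ⟨N, fun n hn => (hF n x).mpr (I.monotone hn hN)⟩)
  obtain ⟨G, hG⟩ := hM.out U.subtype U.injective_subtype F'
  obtain ⟨N, hN⟩ := (G 1).2
  have hz : ∀ n, N ≤ n → ∀ x ∈ U, x ∈ I n := by
    intro n hn x hx
    rw [← hF]
    have h1 : F x n = (G x : ∀ n, E n) n := by
      have := hG ⟨x, hx⟩
      simp only [Submodule.subtype_apply] at this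
      rw [this]; rfl
    have h2 : G x = op x • G 1 := by rw [← map_smul]; simp
    rw [h1, h2]
    simp [hN n hn]
  refine ⟨N, fun m hm => le_antisymm (I.monotone hm) fun x hx => hz N le_rfl x ?_⟩
  exact (hU x).mpr ⟨m, hx⟩

theorem isArtinian_of_hinj
    (hinj : ∀ (M : Type u) [AddCommGroup M] [Module Rᵐᵒᵖ M],
        IsMininjective R M → Module.Injective Rᵐᵒᵖ M) : IsArtinian Rᵐᵒᵖ R := by
  have hn := isNoetherian_of_hinj hinj
  obtain ⟨N, hN, hmax⟩ := set_has_maximal_iff_noetherian.mpr hn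
    {N : Submodule Rᵐᵒᵖ R | IsArtinian Rᵐᵒᵖ N} ⟨⊥, by
      show IsArtinian _ _
      infer_instance⟩
  have hN : IsArtinian Rᵐᵒᵖ N := hN
  by_cases htop : N = ⊤
  · subst htop
    exact (LinearEquiv.isArtinian_iff Submodule.topEquiv).mp hN
  · exfalso
    have : Nontrivial (R ⧸ N) := Submodule.Quotient.nontrivial_iff.mpr htop
    obtain ⟨X, hX⟩ := exists_atom_of_nontrivial hinj (R ⧸ N)
    let N' := X.comap N.mkQ
    have hle : N ≤ N' := by
      intro x hx
      have : N.mkQ x = 0 := by simpa using hx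
      show N.mkQ x ∈ X
      rw [this]; exact X.zero_mem
    apply hmax N' _ _
    · have := isSimpleModule_iff_isAtom.mpr hX
      let f : N →ₗ[Rᵐᵒᵖ] N' := Submodule.inclusion hle
      let g : N' →ₗ[Rᵐᵒᵖ] X := (N.mkQ ∘ₗ N'.subtype).codRestrict X (fun x => x.2)
      have : IsArtinian Rᵐᵒᵖ X := inferInstance
      show IsArtinian _ _
      refine isArtinian_of_range_eq_ker f g ?_
      ext x
      rw [LinearMap.mem_ker]
      constructor
      · rintro ⟨y, rfl⟩
        apply Subtype.ext
        exact (Submodule.Quotient.mk_eq_zero N).mpr y.2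
      · intro h
        have h1 : N.mkQ x = 0 := congrArg Subtype.val h
        have h2 : (x : R) ∈ N := by simpa using h1
        exact ⟨⟨x, h2⟩, rfl⟩
    · refine lt_of_le_of_ne hle fun heq => hX.1 ?_
      rw [eq_bot_iff]
      intro y hy
      obtain ⟨x, rfl⟩ := N.mkQ_surjective y
      have : x ∈ N := by rw [heq]; exact hy
      simpa using this

end PartB


section PartC

/-- Local decomposition data for a ring. -/
structure LocData (R : Type u) [Ring R] {n : ℕ} (e : Fin n → R) : Prop where
  coi : CompleteOrthogonalIdempotents e
  nJ : ∀ i, e i ∉ (⊥ : TwoSidedIdeal R).jacobson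
  loc : ∀ i x, e i * x ∉ (⊥ : TwoSidedIdeal R).jacobson → ∃ s, e i * x * s = e i
  nil : ∀ x ∈ (⊥ : TwoSidedIdeal R).jacobson, IsNilpotent x

variable {R : Type u} [Ring R] {n : ℕ} {e : Fin n → R}


theorem LocData.idem_notMem (H : LocData R e) {p : R} (h : p * p = p) (h0 : p ≠ 0) : p ∉ (⊥ : TwoSidedIdeal R).jacobson := by
  intro hp
  obtain ⟨k, hk⟩ := H.nil p hp
  have : ∀ m : ℕ, p ^ (m + 1) = p := by
    intro m
    induction m with
    | zero => simp
    | succ m ih => rw [pow_succ, ih, h]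
  apply h0
  rw [← this k, pow_succ, hk, zero_mul]

theorem LocData.idem_eq (H : LocData R e) {i : Fin n} {p : R} (h : p * p = p) (h0 : p ≠ 0)
    (h1 : e i * p = p) (h2 : p * e i = p) : p = e i := by
  have h3 := H.idem_notMem h h0
  rw [← h1] at h3
  obtain ⟨s, hs⟩ := H.loc i p h3
  rw [h1] at hs
  calc p = p * e i := h2.symm
    _ = p * p * s := by rw [← hs, mul_assoc]
    _ = e i := by rw [h, hs]

theorem LocData.idem (H : LocData R e) (i : Fin n) : e i * e i = e i := (H.coi.idem i).eq

theorem LocData.ne_zero (H : LocData R e) (i : Fin n) : e i ≠ 0 := by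
  intro h
  apply H.nJ i
  rw [h]; exact TwoSidedIdeal.zero_mem _

theorem LocData.left_inv (H : LocData R e) {i j : Fin n} {c : R} (h1 : e i * c = c)
    (h2 : c * e j = c) (hc : c ∉ (⊥ : TwoSidedIdeal R).jacobson) : ∃ s, s * c = e j := by
  rw [← h1] at hc
  obtain ⟨s, hs⟩ := H.loc i c hc
  rw [h1] at hs
  have hs2 : c * (e j * s * e i) = e i := by
    rw [← mul_assoc, ← mul_assoc, h2, hs, H.idem]
  refine ⟨e j * s * e i, ?_⟩
  generalize ht : e j * s * e i = t at hs2
  have ht1 : e j * t = t := by rw [← ht]; simp only [← mul_assoc, H.idem]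
  apply H.idem_eq
  · calc t * c * (t * c) = t * (c * t) * c := by simp only [mul_assoc]
      _ = t * (e i * c) := by rw [hs2, mul_assoc]
      _ = t * c := by rw [h1]
  · intro h0
    have : c * (t * c) = c := by rw [← mul_assoc, hs2, h1]
    rw [h0, mul_zero] at this
    rw [← this] at hs2
    rw [zero_mul] at hs2
    exact H.ne_zero i hs2.symm
  · rw [← mul_assoc, ht1]
  · rw [mul_assoc, h2]

theorem LocData.sum_mul (H : LocData R e) (z : R) : ∑ i, e i * z = z := by
  rw [← Finset.sum_mul, H.coi.complete, one_mul]

theorem LocData.left_gen (H : LocData R e) {k : Fin n} {z : R} (h : z * e k = z) (hz : z ∉ (⊥ : TwoSidedIdeal R).jacobson) :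
    ∃ s, s * z = e k := by
  have : ∃ i, e i * z ∉ (⊥ : TwoSidedIdeal R).jacobson := by
    by_contra hcon
    push Not at hcon
    apply hz
    rw [← H.sum_mul z]
    exact sum_mem fun i _ => hcon i
  obtain ⟨i, hi⟩ := this
  obtain ⟨s, hs⟩ := H.left_inv (i := i) (j := k) (c := e i * z)
    (by rw [← mul_assoc, H.idem]) (by rw [mul_assoc, h]) hi
  exact ⟨s * e i, by rw [mul_assoc, hs]⟩

/-- The right ideal `a R` for idempotent `a`. -/
def rP (a : R) : Submodule Rᵐᵒᵖ R where
  carrier := {x | a * x = x}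
  add_mem' := by
    intro x y hx hy
    simp only [Set.mem_ofPred_eq] at *
    rw [mul_add, hx, hy]
  zero_mem' := by simp
  smul_mem' := by
    intro c x hx
    simp only [Set.mem_ofPred_eq] at *
    rw [show c • x = x * unop c from rfl, ← mul_assoc, hx]

/-- The right ideal `a J` for idempotent `a`. -/
def rK (a : R) : Submodule Rᵐᵒᵖ R where
  carrier := {x | a * x = x ∧ x ∈ (⊥ : TwoSidedIdeal R).jacobson}
  add_mem' := by
    intro x y hx hy
    exact ⟨by rw [mul_add, hx.1, hy.1], add_mem hx.2 hy.2⟩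
  zero_mem' := ⟨by simp, zero_mem _⟩
  smul_mem' := by
    intro c x hx
    refine ⟨?_, ?_⟩
    · rw [show c • x = x * unop c from rfl, ← mul_assoc, hx.1]
    · exact TwoSidedIdeal.mul_mem_right _ _ _ hx.2

theorem rK_le_rP (a : R) : rK a ≤ rP a := fun _ h => h.1

theorem mem_rP {a x : R} : x ∈ rP a ↔ a * x = x := Iff.rfl
theorem mem_rK {a x : R} : x ∈ rK a ↔ a * x = x ∧ x ∈ (⊥ : TwoSidedIdeal R).jacobson := Iff.rfl

theorem LocData.rK_atom (H : LocData R e) (hN : IsNoetherian Rᵐᵒᵖ R)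
    (hal : ∀ (T : Type u) [AddCommGroup T] [Module Rᵐᵒᵖ T] [IsSimpleModule Rᵐᵒᵖ T],
      IsAlmostInjective.{u, u, u} R T) (i : Fin n) (hK : rK (e i) ≠ ⊥) : IsAtom (rK (e i)) := by
  have : Nontrivial (rK (e i)) := (Submodule.nontrivial_iff_ne_bot).mpr hK
  obtain ⟨N, hN, -⟩ := (eq_top_or_exists_le_coatom
    (⊥ : Submodule Rᵐᵒᵖ (rK (e i)))).resolve_left bot_ne_top
  have hT := isSimpleModule_iff_isCoatom.mpr hN
  have hei : e i ∈ rP (e i) := H.idem i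
  rcases hal (rK (e i) ⧸ N) (rK (e i)) (rP (e i)) (Submodule.inclusion (rK_le_rP _))
    (Submodule.inclusion_injective _) N.mkQ with ⟨g, hg⟩ | ⟨D, hD, π, hπ, k, hk⟩
  · exfalso
    apply hN.1
    rw [eq_top_iff]
    intro x _
    have h1 : N.mkQ x = 0 := by
      rw [← hg, LinearMap.comp_apply]
      have : Submodule.inclusion (rK_le_rP (e i)) x = op (x : R) • (⟨e i, hei⟩ : rP (e i)) := by
        apply Subtype.ext
        exact x.2.1.symm
      rw [this, map_smul]
      exact simple_smul_J x.2.2 _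
    simpa using h1
  · have hπ' : ∀ d : D, π d = d := fun d => LinearMap.congr_fun hπ d
    have hgen : ∀ x : rP (e i), π x = op (x : R) • π ⟨e i, hei⟩ := by
      intro x
      rw [← map_smul]
      congr 1
      apply Subtype.ext
      exact x.2.symm
    generalize hp : π ⟨e i, hei⟩ = p at hgen
    have hpe : ((p : rP (e i)) : R) = e i := by
      apply H.idem_eq
      · have h1 := hgen p
        rw [hπ'] at h1
        have h2 := congrArg (fun d : D => ((d : rP (e i)) : R)) h1
        exact h2.symm
      · intro h0
        apply hD
        rw [eq_bot_iff]
        intro d hd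
        have h1 := hgen d
        rw [hπ' ⟨d, hd⟩] at h1
        have h2 := congrArg (fun d : D => ((d : rP (e i)) : R)) h1
        have h3 : (d : R) = ((p : rP (e i)) : R) * d := h2
        rw [h0, zero_mul] at h3
        rw [Submodule.mem_bot]
        exact Subtype.ext h3
      · exact (p : rP (e i)).2
      · have h1 := hgen ⟨e i, hei⟩
        rw [hp] at h1
        have h2 := congrArg (fun d : D => ((d : rP (e i)) : R)) h1
        exact h2.symm
    have hNbot : N = ⊥ := by
      rw [eq_bot_iff]
      intro x hx
      have h1 : N.mkQ x = 0 := by simpa using hx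
      have h2 := LinearMap.congr_fun hk x
      rw [LinearMap.comp_apply, h1, map_zero, LinearMap.comp_apply, hgen] at h2
      have h3 := congrArg (fun d : D => ((d : rP (e i)) : R)) h2
      have h4 : (0 : R) = ((p : rP (e i)) : R) * x := h3
      rw [hpe, x.2.1] at h4
      rw [Submodule.mem_bot]
      exact Subtype.ext h4.symm
    subst hNbot
    rw [← isSimpleModule_iff_isAtom]
    exact IsSimpleModule.congr (Submodule.quotEquivOfEqBot _ rfl).symm

/-- in a minimal right ideal every nonzero element generates -/
theorem atom_gen {K : Submodule Rᵐᵒᵖ R} (hK : IsAtom K) {x y : R} (hx : x ∈ K) (hy : y ∈ K)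
    (h0 : x ≠ 0) : ∃ r, x * r = y := by
  have := isSimpleModule_iff_isAtom.mpr hK
  obtain ⟨r, hr⟩ := IsSimpleModule.toSpanSingleton_surjective Rᵐᵒᵖ
    (m := (⟨x, hx⟩ : K)) (fun h => h0 (congrArg Subtype.val h)) ⟨y, hy⟩
  exact ⟨unop r, congrArg Subtype.val hr⟩

/-- local data together with minimality of `e J` -/
structure LocData2 (R : Type u) [Ring R] {n : ℕ} (e : Fin n → R) : Prop extends LocData R e where
  atom : ∀ i, rK (e i) ≠ ⊥ → IsAtom (rK (e i))

theorem LocData2.gen (H : LocData2 R e) {i : Fin n} {x y : R} (hx : x ∈ rK (e i))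
    (hy : y ∈ rK (e i)) (h0 : x ≠ 0) : ∃ r, x * r = y :=
  atom_gen (H.atom i (fun h => h0 (by rw [h] at hx; exact hx))) hx hy h0

theorem LocData2.sq_zero (H : LocData2 R e) : JacobsonSquareZero R := by
  intro x hx y hy
  rw [← H.sum_mul x, Finset.sum_mul]
  refine Finset.sum_eq_zero fun i _ => ?_
  have hK : e i * x ∈ rK (e i) :=
    ⟨by rw [← mul_assoc, H.idem], TwoSidedIdeal.mul_mem_left _ _ _ hx⟩
  by_cases h : rK (e i) = ⊥
  · rw [h] at hK
    rw [(Submodule.mem_bot _).mp hK, zero_mul]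
  · have := isSimpleModule_iff_isAtom.mpr (H.atom i h)
    have := simple_smul_J hy (⟨_, hK⟩ : rK (e i))
    exact congrArg Subtype.val this

theorem uniserial_of {S : Type u} [Ring S] {M : Type u} [AddCommGroup M] [Module S M]
    (h : ∀ x y : M, (∃ r : S, r • x = y) ∨ ∃ r : S, r • y = x) (N P : Submodule S M) :
    N ≤ P ∨ P ≤ N := by
  by_contra hcon
  push Not at hcon
  obtain ⟨x, hx, hx'⟩ := SetLike.not_le_iff_exists.mp hcon.1
  obtain ⟨y, hy, hy'⟩ := SetLike.not_le_iff_exists.mp hcon.2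
  rcases h x y with ⟨r, rfl⟩ | ⟨r, rfl⟩
  · exact hy' (N.smul_mem r hx)
  · exact hx' (P.smul_mem r hy)

theorem isInternal_of {S : Type u} [Ring S] {M : Type u} [AddCommGroup M] [Module S M]
    (c : Fin n → Submodule S M) (p : Fin n → M →+ M) (h1 : ∀ i x, p i x ∈ c i)
    (h2 : ∀ i, ∀ x ∈ c i, p i x = x) (h3 : ∀ i j, i ≠ j → ∀ x ∈ c j, p i x = 0)
    (h4 : ∀ x, ∑ i, p i x = x) : DirectSum.IsInternal c := by
  rw [DirectSum.isInternal_submodule_iff_iSupIndep_and_iSup_eq_top]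
  constructor
  · intro i
    rw [Submodule.disjoint_def]
    intro x hx hx'
    rw [← h2 i x hx]
    have : ∀ y ∈ (⨆ j, ⨆ (_ : j ≠ i), c j), p i y = 0 := by
      intro y hy
      induction hy using Submodule.iSup_induction' with
      | mem j y hy =>
        by_cases hj : j = i
        · simp only [hj, ne_eq, not_true_eq_false, iSup_false, Submodule.mem_bot] at hy
          rw [hy, map_zero]
        · simp only [ne_eq, hj, not_false_eq_true, iSup_pos] at hy
          exact h3 i j (Ne.symm hj) y hy
      | zero => simp
      | add a b _ _ ha hb => rw [map_add, ha, hb, add_zero]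
    exact this x hx'
  · rw [eq_top_iff]
    intro x _
    rw [← h4 x]
    exact sum_mem fun i _ => (le_iSup c i) (h1 i x)

theorem LocData2.rightSerial (H : LocData2 R e) : RightSerial R := by
  refine ⟨n, fun i => rP (e i), ?_, ?_⟩
  · refine isInternal_of _ (fun i => AddMonoidHom.mulLeft (e i)) ?_ ?_ ?_ ?_
    · intro i x
      rw [mem_rP]; simp [← mul_assoc, H.idem]
    · intro i x hx; exact hx
    · intro i j hij x hx
      rw [mem_rP] at hx
      have h := H.coi.ortho hij
      simp only at h
      rw [AddMonoidHom.coe_mulLeft, ← hx, ← mul_assoc, h, zero_mul]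
    · intro x; exact H.sum_mul x
  · intro i
    apply uniserial_of
    have key : ∀ x y : rP (e i), (x : R) ∉ (⊥ : TwoSidedIdeal R).jacobson → ∃ r : Rᵐᵒᵖ, r • x = y := by
      intro x y hx
      rw [← x.2] at hx
      obtain ⟨s, hs⟩ := H.loc i x hx
      refine ⟨op (s * y), Subtype.ext ?_⟩
      show (x : R) * (s * y) = y
      have h1 : e i * (x : R) = x := x.2
      rw [h1] at hs
      rw [← mul_assoc, hs]; exact y.2
    intro x y
    by_cases hx : (x : R) ∈ (⊥ : TwoSidedIdeal R).jacobson
    · by_cases hy : (y : R) ∈ (⊥ : TwoSidedIdeal R).jacobson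
      · by_cases h0 : (x : R) = 0
        · exact Or.inr ⟨0, by rw [zero_smul]; exact Subtype.ext h0.symm⟩
        · obtain ⟨r, hr⟩ := H.gen (x := x) (y := y) (i := i) ⟨x.2, hx⟩ ⟨y.2, hy⟩ h0
          exact Or.inl ⟨op r, Subtype.ext hr⟩
      · exact Or.inr (key y x hy)
    · exact Or.inl (key x y hx)

end PartC


section PartD

variable {R : Type u} [Ring R] {n : ℕ} {e : Fin n → R}

/-- left multiplication by `x = a x` as a map `R → a R` -/
def lmulP (a x : R) (h : a * x = x) : R →ₗ[Rᵐᵒᵖ] rP a where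
  toFun r := ⟨x * r, by rw [mem_rP, ← mul_assoc, h]⟩
  map_add' r s := Subtype.ext (mul_add x r s)
  map_smul' c r := Subtype.ext (mul_assoc x r (unop c)).symm

/-- the maximal right ideal `{r | a r ∈ J}` -/
def rM (a : R) : Submodule Rᵐᵒᵖ R where
  carrier := {x | a * x ∈ (⊥ : TwoSidedIdeal R).jacobson}
  add_mem' := by
    intro x y hx hy
    simp only [Set.mem_ofPred_eq] at *
    rw [mul_add]; exact add_mem hx hy
  zero_mem' := by
    simp only [Set.mem_ofPred_eq, mul_zero]; exact zero_mem _
  smul_mem' := by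
    intro c x hx
    simp only [Set.mem_ofPred_eq] at *
    rw [show c • x = x * unop c from rfl, ← mul_assoc]
    exact TwoSidedIdeal.mul_mem_right _ _ _ hx

theorem mem_rM {a x : R} : x ∈ rM a ↔ a * x ∈ (⊥ : TwoSidedIdeal R).jacobson := Iff.rfl

theorem LocData.simple_rM (H : LocData R e) (k : Fin n) : IsSimpleModule Rᵐᵒᵖ (R ⧸ rM (e k)) := by
  rw [isSimpleModule_iff_toSpanSingleton_surjective]
  constructor
  · rw [Submodule.Quotient.nontrivial_iff]
    intro h
    have : (1 : R) ∈ rM (e k) := by rw [h]; trivial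
    rw [mem_rM, mul_one] at this
    exact H.nJ k this
  · intro t ht t'
    obtain ⟨r, rfl⟩ := Submodule.Quotient.mk_surjective _ t
    obtain ⟨r', rfl⟩ := Submodule.Quotient.mk_surjective _ t'
    have hr : e k * r ∉ (⊥ : TwoSidedIdeal R).jacobson := fun h =>
      ht ((Submodule.Quotient.mk_eq_zero _).mpr h)
    obtain ⟨s, hs⟩ := H.loc k r hr
    refine ⟨op (s * r'), ?_⟩
    rw [LinearMap.toSpanSingleton_apply, ← Submodule.Quotient.mk_smul, Submodule.Quotient.eq,
      mem_rM]
    have : e k * (op (s * r') • r - r') = 0 := by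
      rw [show op (s * r') • r = r * (s * r') from rfl, mul_sub, ← mul_assoc, ← mul_assoc, hs,
        sub_self]
    rw [this]; exact zero_mem _

/-- the embedding of the simple module `R / {r | e r ∈ J}` induced by `x = a x e ∈ J`. -/
def embT (hsq : JacobsonSquareZero R) {a b x : R} (h : a * x = x) (h' : x * b = x)
    (hx : x ∈ (⊥ : TwoSidedIdeal R).jacobson) : (R ⧸ rM b) →ₗ[Rᵐᵒᵖ] rP a :=
  (rM b).liftQ (lmulP a x h) (by
    intro r hr
    rw [LinearMap.mem_ker]
    apply Subtype.ext
    show x * r = 0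
    rw [← h', mul_assoc]
    exact hsq _ hx _ hr)

theorem embT_mk (hsq : JacobsonSquareZero R) {a b x : R} (h : a * x = x) (h' : x * b = x)
    (hx : x ∈ (⊥ : TwoSidedIdeal R).jacobson) (r : R) :
    ((embT hsq h h' hx (Submodule.Quotient.mk r) : rP a) : R) = x * r := rfl

theorem LocData2.embT_injective (H : LocData2 R e) {a x : R} {k : Fin n} (h : a * x = x)
    (h' : x * e k = x) (hx : x ∈ (⊥ : TwoSidedIdeal R).jacobson) (h0 : x ≠ 0) :
    Function.Injective (embT H.sq_zero h h' hx) := by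
  rw [← LinearMap.ker_eq_bot, eq_bot_iff]
  intro t ht
  obtain ⟨r, rfl⟩ := Submodule.Quotient.mk_surjective _ t
  rw [LinearMap.mem_ker] at ht
  have h1 : x * r = 0 := congrArg Subtype.val ht
  rw [Submodule.mem_bot, Submodule.Quotient.mk_eq_zero, mem_rM]
  by_contra hr
  obtain ⟨s, hs⟩ := H.loc k r hr
  apply h0
  calc x = x * e k := h'.symm
    _ = x * (e k * r * s) := by rw [hs]
    _ = x * e k * r * s := by simp only [mul_assoc]
    _ = 0 := by rw [h', h1, zero_mul]

theorem LocData2.compare (H : LocData2 R e)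
    (hal : ∀ (T : Type u) [AddCommGroup T] [Module Rᵐᵒᵖ T] [IsSimpleModule Rᵐᵒᵖ T],
      IsAlmostInjective.{u, u, u} R T) {i j k : Fin n} {x y : R}
    (hx1 : e i * x = x) (hx2 : x * e k = x) (hxJ : x ∈ (⊥ : TwoSidedIdeal R).jacobson)
    (hx0 : x ≠ 0)
    (hy1 : e j * y = y) (hy2 : y * e k = y) (hyJ : y ∈ (⊥ : TwoSidedIdeal R).jacobson)
    (hy0 : y ≠ 0) : ∃ r, r * x = y := by
  have hT := H.simple_rM k
  have hsq := H.sq_zero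
  let φ := embT H.sq_zero hx1 hx2 hxJ
  let ψ := embT H.sq_zero hy1 hy2 hyJ
  have hφ : Function.Injective φ := H.embT_injective hx1 hx2 hxJ hx0
  have hψ : Function.Injective ψ := H.embT_injective hy1 hy2 hyJ hy0
  let t1 : R ⧸ rM (e k) := Submodule.Quotient.mk 1
  have ht1 : t1 ≠ 0 := by
    intro h
    have := (Submodule.Quotient.mk_eq_zero _).mp h
    rw [mem_rM, mul_one] at this
    exact H.nJ k this
  let X : rP (e i) := ⟨x, hx1⟩
  let Y : rP (e j) := ⟨y, hy1⟩
  have hφ1 : φ t1 = X := Subtype.ext (mul_one x)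
  have hψ1 : ψ t1 = Y := Subtype.ext (mul_one y)
  let Ei : rP (e i) := ⟨e i, H.idem i⟩
  let Ej : rP (e j) := ⟨e j, H.idem j⟩
  have hEi : ∀ u : rP (e i), op (u : R) • Ei = u := fun u => Subtype.ext u.2
  have hEj : ∀ u : rP (e j), op (u : R) • Ej = u := fun u => Subtype.ext u.2
  rcases hal (R ⧸ rM (e k)) ((R ⧸ rM (e k)) × (R ⧸ rM (e k))) (rP (e i) × rP (e j))
    (LinearMap.prodMap φ ψ) (by
      rintro ⟨a, b⟩ ⟨c, d⟩ h
      simp only [LinearMap.prodMap_apply, Prod.mk.injEq] at h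
      rw [hφ h.1, hψ h.2])
    (LinearMap.fst _ _ _ + LinearMap.snd _ _ _) with ⟨g, hg⟩ | ⟨D, hD, π, hπ, h, hh⟩
  · exfalso
    have h1 := LinearMap.congr_fun hg (t1, 0)
    simp only [LinearMap.comp_apply, LinearMap.prodMap_apply, map_zero, LinearMap.add_apply,
      LinearMap.fst_apply, LinearMap.snd_apply, add_zero, hφ1] at h1
    apply ht1
    rw [← h1]
    have : ((X, 0) : rP (e i) × rP (e j)) = op x • (Ei, 0) := by
      rw [Prod.smul_mk, smul_zero, hEi X]
    rw [this, map_smul]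
    exact simple_smul_J hxJ _
  · -- matrix entries of the idempotent endomorphism `π`
    let p : (rP (e i) × rP (e j)) →ₗ[Rᵐᵒᵖ] (rP (e i) × rP (e j)) := D.subtype ∘ₗ π
    have hpD : ∀ d ∈ D, p d = d := fun d hd =>
      congrArg Subtype.val (LinearMap.congr_fun hπ ⟨d, hd⟩)
    have hpp : ∀ d, p (p d) = p d := fun d => hpD _ (π d).2
    have hmat : ∀ (q : (rP (e i) × rP (e j)) →ₗ[Rᵐᵒᵖ] (rP (e i) × rP (e j)))
        (u : rP (e i)) (v : rP (e j)),
        ((q (u, v)).1 : R) = ((q (Ei, 0)).1 : R) * u + ((q (0, Ej)).1 : R) * v ∧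
        ((q (u, v)).2 : R) = ((q (Ei, 0)).2 : R) * u + ((q (0, Ej)).2 : R) * v := by
      intro q u v
      have h1 : ((u, v) : rP (e i) × rP (e j)) = op (u : R) • (Ei, 0) + op (v : R) • (0, Ej) := by
        rw [Prod.smul_mk, Prod.smul_mk, hEi u, hEj v]; simp
      have h2 : q (u, v) = op (u : R) • q (Ei, 0) + op (v : R) • q (0, Ej) := by
        rw [h1, map_add, map_smul, map_smul]
      rw [h2]
      exact ⟨rfl, rfl⟩
    have hp : ∀ a b, p (φ a, ψ b) = h (a + b) := fun a b =>
      congrArg Subtype.val (LinearMap.congr_fun hh (a, b)).symm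
    -- elements of `e i J` are multiples of `x`
    have hKi : ∀ u : rP (e i), (u : R) ∈ (⊥ : TwoSidedIdeal R).jacobson → ∃ t, φ t = u := by
      intro u hu
      obtain ⟨r, hr⟩ := H.gen (i := i) (x := x) (y := u) ⟨hx1, hxJ⟩ ⟨u.2, hu⟩ hx0
      exact ⟨Submodule.Quotient.mk r, Subtype.ext hr⟩
    have hKj : ∀ u : rP (e j), (u : R) ∈ (⊥ : TwoSidedIdeal R).jacobson → ∃ t, ψ t = u := by
      intro u hu
      obtain ⟨r, hr⟩ := H.gen (i := j) (x := y) (y := u) ⟨hy1, hyJ⟩ ⟨u.2, hu⟩ hy0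
      exact ⟨Submodule.Quotient.mk r, Subtype.ext hr⟩
    have hright : ∀ (q : (rP (e i) × rP (e j)) →ₗ[Rᵐᵒᵖ] (rP (e i) × rP (e j))),
        ((q (Ei, 0)).1 : R) * e i = (q (Ei, 0)).1 ∧ ((q (Ei, 0)).2 : R) * e i = (q (Ei, 0)).2 ∧
        ((q (0, Ej)).1 : R) * e j = (q (0, Ej)).1 ∧ ((q (0, Ej)).2 : R) * e j = (q (0, Ej)).2 := by
      intro q
      have h1 := hmat q Ei 0
      have h2 := hmat q 0 Ej
      simp only [Submodule.coe_zero, mul_zero, add_zero, zero_add] at h1 h2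
      exact ⟨h1.1.symm, h1.2.symm, h2.1.symm, h2.2.symm⟩
    have hinj : Function.Injective h := by
      by_cases h' : h = 0
      swap
      · rw [injective_iff_map_eq_zero]
        intro t ht
        by_contra ht0
        apply h'
        ext1 t'
        obtain ⟨s, hs⟩ := IsSimpleModule.toSpanSingleton_surjective Rᵐᵒᵖ ht0 t'
        rw [LinearMap.toSpanSingleton_apply] at hs
        rw [← hs, map_smul, ht, smul_zero, LinearMap.zero_apply]
      exfalso
      subst h'
      have hp0 : ∀ a b, p (φ a, ψ b) = 0 := fun a b => by rw [hp]; simp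
      have hX : p (X, 0) = 0 := by rw [← hφ1, ← map_zero ψ]; exact hp0 _ _
      have hY : p (0, Y) = 0 := by rw [← hψ1, ← map_zero φ]; exact hp0 _ _
      have hmX := hmat p X 0
      have hmY := hmat p 0 Y
      rw [hX] at hmX
      rw [hY] at hmY
      simp only [Prod.fst_zero, Prod.snd_zero, Submodule.coe_zero, mul_zero, add_zero,
        zero_add] at hmX hmY
      obtain ⟨r1, r2, r3, r4⟩ := hright p
      have gen : ∀ {l m : Fin n} {c z : R}, e l * c = c → c * e m = c → e m * z = z → z ≠ 0 →
          0 = c * z → c ∈ (⊥ : TwoSidedIdeal R).jacobson := by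
        intro l m c z h1 h2 h3 h4 h5
        by_contra hc
        obtain ⟨s, hs⟩ := H.left_inv h1 h2 hc
        apply h4
        rw [← h3, ← hs, mul_assoc, ← h5, mul_zero]
      have j1 := gen (p (Ei, 0)).1.2 r1 hx1 hx0 hmX.1
      have j2 := gen (p (Ei, 0)).2.2 r2 hx1 hx0 hmX.2
      have j3 := gen (p (0, Ej)).1.2 r3 hy1 hy0 hmY.1
      have j4 := gen (p (0, Ej)).2.2 r4 hy1 hy0 hmY.2
      apply hD
      rw [eq_bot_iff]
      rintro ⟨u, v⟩ hd
      have hq := hmat p u v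
      rw [hpD _ hd] at hq
      have hu : (u : R) ∈ (⊥ : TwoSidedIdeal R).jacobson := by
        rw [hq.1]
        exact add_mem (TwoSidedIdeal.mul_mem_right _ _ _ j1) (TwoSidedIdeal.mul_mem_right _ _ _ j3)
      have hv : (v : R) ∈ (⊥ : TwoSidedIdeal R).jacobson := by
        rw [hq.2]
        exact add_mem (TwoSidedIdeal.mul_mem_right _ _ _ j2) (TwoSidedIdeal.mul_mem_right _ _ _ j4)
      obtain ⟨a, ha⟩ := hKi u hu
      obtain ⟨b, hb⟩ := hKj v hv
      rw [Submodule.mem_bot, ← hpD _ hd, ← ha, ← hb]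
      exact hp0 a b
    -- the complementary idempotent
    have hXY : p (X, -Y) = 0 := by
      rw [← hφ1, ← hψ1, ← map_neg, hp]; simp
    let q := LinearMap.id - p
    have hqXY : q (X, -Y) = (X, -Y) := by simp [q, hXY]
    have hpq : ∀ d, p (q d) = 0 := fun d => by simp [q, hpp]
    obtain ⟨r1, r2, r3, r4⟩ := hright q
    have hm := (hmat q X (-Y)).2
    rw [hqXY] at hm
    have hm' : -y = ((q (Ei, 0)).2 : R) * x + ((q (0, Ej)).2 : R) * (-y) := hm
    by_cases hd : ((q (0, Ej)).2 : R) ∈ (⊥ : TwoSidedIdeal R).jacobson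
    · rw [mul_neg, hsq _ hd _ hyJ, neg_zero, add_zero] at hm'
      exact ⟨-((q (Ei, 0)).2 : R), by rw [neg_mul, ← hm', neg_neg]⟩
    · have hdd : e j * ((q (0, Ej)).2 : R) = (q (0, Ej)).2 := (q (0, Ej)).2.2
      rw [← hdd] at hd
      obtain ⟨s, hs⟩ := H.loc j _ hd
      rw [hdd] at hs
      have hc1 : e i * ((q (0, Ej)).1 : R) = (q (0, Ej)).1 := (q (0, Ej)).1.2
      -- the element `(c s y, y)` is killed by `p`
      let c' : R := ((q (0, Ej)).1 : R) * (s * e j)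
      have hc'1 : e i * c' = c' := by simp only [c', ← mul_assoc, hc1]
      have hc'2 : c' * e j = c' := by simp only [c', mul_assoc, H.idem]
      let Z : rP (e i) := ⟨c' * y, by rw [mem_rP, ← mul_assoc, hc'1]⟩
      have hZY : p (Z, Y) = 0 := by
        have h1 : ((Z, Y) : rP (e i) × rP (e j)) = op (s * y) • q (0, Ej) := by
          apply Prod.ext
          · apply Subtype.ext
            show c' * y = ((q (0, Ej)).1 : R) * (s * y)
            simp only [c', mul_assoc, hy1]
          · apply Subtype.ext
            show y = ((q (0, Ej)).2 : R) * (s * y)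
            rw [← mul_assoc, hs, hy1]
        rw [h1, map_smul, hpq, smul_zero]
      have hsum : p (X + Z, 0) = 0 := by
        have h1 : ((X + Z, 0) : rP (e i) × rP (e j)) = (X, -Y) + (Z, Y) := by
          simp
        rw [h1, map_add, hXY, hZY, add_zero]
      have hXZ : X + Z = 0 := by
        obtain ⟨t, ht⟩ := hKi (X + Z) (add_mem hxJ (TwoSidedIdeal.mul_mem_left _ _ _ hyJ))
        rw [← ht, ← map_zero ψ, hp, add_zero] at hsum
        have h2 : h t = 0 := Subtype.ext hsum
        rw [map_eq_zero_iff _ hinj] at h2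
        rw [← ht, h2, map_zero]
      have hxc : x + c' * y = 0 := congrArg Subtype.val hXZ
      have hc'J : c' ∉ (⊥ : TwoSidedIdeal R).jacobson := by
        intro hc
        rw [hsq _ hc _ hyJ, add_zero] at hxc
        exact hx0 hxc
      obtain ⟨s', hs'⟩ := H.left_inv hc'1 hc'2 hc'J
      refine ⟨-s', ?_⟩
      rw [eq_neg_of_add_eq_zero_left hxc, neg_mul_neg, ← mul_assoc, hs', hy1]

theorem LocData2.leftSerial (H : LocData2 R e)
    (hal : ∀ (T : Type u) [AddCommGroup T] [Module Rᵐᵒᵖ T] [IsSimpleModule Rᵐᵒᵖ T],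
      IsAlmostInjective.{u, u, u} R T) : LeftSerial R := by
  let c : Fin n → Submodule R R := fun i =>
    { carrier := {x | x * e i = x}
      add_mem' := by
        intro x y hx hy
        simp only [Set.mem_ofPred_eq] at *
        rw [add_mul, hx, hy]
      zero_mem' := by simp
      smul_mem' := by
        intro c x hx
        simp only [Set.mem_ofPred_eq, smul_eq_mul] at *
        rw [mul_assoc, hx] }
  have hc : ∀ i x, x ∈ c i ↔ x * e i = x := fun _ _ => Iff.rfl
  refine ⟨n, c, ?_, ?_⟩
  · refine isInternal_of _ (fun i => AddMonoidHom.mulRight (e i)) ?_ ?_ ?_ ?_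
    · intro i x
      rw [hc]; simp [mul_assoc, H.idem]
    · intro i x hx; exact hx
    · intro i j hij x hx
      rw [hc] at hx
      have h := H.coi.ortho hij.symm
      simp only at h
      rw [AddMonoidHom.mulRight_apply, ← hx, mul_assoc, h, mul_zero]
    · intro x
      simp only [AddMonoidHom.mulRight_apply]
      rw [← Finset.mul_sum, H.coi.complete, mul_one]
  · intro k
    apply uniserial_of
    have key : ∀ x y : c k, (x : R) ∉ (⊥ : TwoSidedIdeal R).jacobson → ∃ r : R, r • x = y := by
      intro x y hx
      obtain ⟨s, hs⟩ := H.left_gen x.2 hx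
      refine ⟨y * s, Subtype.ext ?_⟩
      show (y : R) * s * x = y
      rw [mul_assoc, hs]; exact y.2
    intro x y
    by_cases hx : (x : R) ∈ (⊥ : TwoSidedIdeal R).jacobson
    · by_cases hy : (y : R) ∈ (⊥ : TwoSidedIdeal R).jacobson
      · by_cases h0 : (x : R) = 0
        · exact Or.inr ⟨0, by rw [zero_smul]; exact Subtype.ext h0.symm⟩
        · left
          have : ∃ i, e i * (x : R) ≠ 0 := by
            by_contra hcon
            push Not at hcon
            apply h0
            rw [← H.sum_mul (x : R)]
            exact Finset.sum_eq_zero fun i _ => hcon i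
          obtain ⟨i, hi⟩ := this
          have hx2 : (x : R) * e k = x := x.2
          have hy2 : (y : R) * e k = y := y.2
          have hj : ∀ j, ∃ r, r * (e i * (x : R)) = e j * (y : R) := by
            intro j
            by_cases hj0 : e j * (y : R) = 0
            · exact ⟨0, by rw [hj0, zero_mul]⟩
            · exact H.compare hal (i := i) (j := j) (k := k)
                (by rw [← mul_assoc, H.idem]) (by rw [mul_assoc, hx2])
                (TwoSidedIdeal.mul_mem_left _ _ _ hx) hi
                (by rw [← mul_assoc, H.idem]) (by rw [mul_assoc, hy2])
                (TwoSidedIdeal.mul_mem_left _ _ _ hy) hj0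
          choose r hr using hj
          refine ⟨(∑ j, r j) * e i, Subtype.ext ?_⟩
          show (∑ j, r j) * e i * (x : R) = y
          rw [mul_assoc, Finset.sum_mul, ← H.sum_mul (y : R)]
          exact Finset.sum_congr rfl fun j _ => hr j
      · exact Or.inr (key y x hy)
    · exact Or.inl (key x y hx)

theorem forward_dir
    (hmin : ∀ I : Submodule Rᵐᵒᵖ R, IsAtom I → IsAlmostInjective.{u, u, u} R ↥I)
    (hinj : ∀ (M : Type u) [AddCommGroup M] [Module Rᵐᵒᵖ M],
        IsMininjective R M → Module.Injective Rᵐᵒᵖ M) :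
    IsArtinian Rᵐᵒᵖ R ∧ RightSerial R ∧ LeftSerial R ∧ JacobsonSquareZero R := by
  have hart := isArtinian_of_hinj hinj
  have hnoe := isNoetherian_of_hinj hinj
  have hal : ∀ (T : Type u) [AddCommGroup T] [Module Rᵐᵒᵖ T] [IsSimpleModule Rᵐᵒᵖ T],
      IsAlmostInjective.{u, u, u} R T := fun T => simple_almostInjective hmin hinj T
  obtain ⟨n, e, h1, h2, h3⟩ := exists_idem_right R hart
  have H : LocData R e := ⟨h1, h2, h3, J_nilpotent R hart⟩
  have H2 : LocData2 R e := ⟨H, H.rK_atom hnoe hal⟩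
  exact ⟨hart, H2.rightSerial, H2.leftSerial hal, H2.sq_zero⟩

end PartD


section PartE

theorem sub_le_or {R : Type u} [Ring R] {c : Submodule Rᵐᵒᵖ R}
    (hc : ∀ N P : Submodule Rᵐᵒᵖ ↥c, N ≤ P ∨ P ≤ N) {A B : Submodule Rᵐᵒᵖ R}
    (hA : A ≤ c) (hB : B ≤ c) : A ≤ B ∨ B ≤ A := by
  rcases hc (A.comap c.subtype) (B.comap c.subtype) with h | h
  · exact Or.inl fun x hx => h (show (⟨x, hA hx⟩ : c) ∈ A.comap c.subtype from hx)
  · exact Or.inr fun x hx => h (show (⟨x, hB hx⟩ : c) ∈ B.comap c.subtype from hx)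

theorem mul_mem_right_sub {R : Type u} [Ring R] (c : Submodule Rᵐᵒᵖ R) {x : R} (hx : x ∈ c)
    (r : R) : x * r ∈ c := c.smul_mem (op r) hx

theorem bot_or_atom {R : Type u} [Ring R] (hart : IsArtinian Rᵐᵒᵖ R)
    (hsq : JacobsonSquareZero R) {c : Submodule Rᵐᵒᵖ R}
    (hc : ∀ N P : Submodule Rᵐᵒᵖ ↥c, N ≤ P ∨ P ≤ N) {L : Submodule Rᵐᵒᵖ R}
    (hL : L ≤ c) (hLc : ¬ c ≤ L) : L = ⊥ ∨ IsAtom L := by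
  obtain ⟨n, e, he, -, hloc⟩ := exists_idem_right R hart
  have hsum : ∀ x : R, x = ∑ k, e k * x := fun x => by
    rw [← Finset.sum_mul, he.complete, one_mul]
  have hsum' : ∀ x : R, x = ∑ k, x * e k := fun x => by
    rw [← Finset.mul_sum, he.complete, mul_one]
  have hLJ : ∀ r ∈ L, r ∈ (⊥ : TwoSidedIdeal R).jacobson := by
    intro r hr
    rw [hsum r]
    refine sum_mem fun k _ => ?_
    by_contra hk
    obtain ⟨s, hs⟩ := hloc k r hk
    let m : Submodule Rᵐᵒᵖ R :=
      { carrier := {x | x ∈ c ∧ e k * x = 0}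
        add_mem' := fun {a b} ha hb => ⟨add_mem ha.1 hb.1, by rw [mul_add, ha.2, hb.2, add_zero]⟩
        zero_mem' := ⟨zero_mem _, mul_zero _⟩
        smul_mem' := fun a x hx => ⟨c.smul_mem a hx.1, by
          show e k * (x * unop a) = 0
          rw [← mul_assoc, hx.2, zero_mul]⟩ }
    have hm : m ≤ c := fun x hx => hx.1
    rcases sub_le_or hc hL hm with h | h
    · apply hk
      rw [(h hr).2]
      exact zero_mem _
    · apply hLc
      intro t ht
      have h1 : r * (s * e k * t) ∈ L := mul_mem_right_sub L hr _
      have h2 : t - r * (s * e k * t) ∈ L := h ⟨sub_mem ht (hL h1), by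
        rw [mul_sub, ← mul_assoc, ← mul_assoc, ← mul_assoc, hs, (he.idem k).eq, sub_self]⟩
      have := add_mem h2 h1
      rwa [sub_add_cancel] at this
  by_cases hbot : L = ⊥
  · exact Or.inl hbot
  refine Or.inr ⟨hbot, fun X hX => ?_⟩
  by_contra hX0
  apply hX.not_ge
  obtain ⟨x, hxX, hx0⟩ := (Submodule.ne_bot_iff X).mp hX0
  intro z hz
  rw [hsum' z]
  refine sum_mem fun k _ => ?_
  have hzk : z * e k ∈ L := mul_mem_right_sub L hz _
  have hspan : Submodule.span Rᵐᵒᵖ {z * e k} ≤ c := by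
    rw [Submodule.span_singleton_le_iff_mem]
    exact hL hzk
  rcases sub_le_or hc hspan (hX.le.trans hL) with h | h
  · exact h (Submodule.mem_span_singleton_self _)
  · obtain ⟨a, ha⟩ := Submodule.mem_span_singleton.mp (h hxX)
    have ha' : z * e k * unop a = x := ha
    have hnJ : e k * unop a ∉ (⊥ : TwoSidedIdeal R).jacobson := by
      intro hJ
      apply hx0
      rw [← ha', mul_assoc]
      exact hsq _ (hLJ z hz) _ hJ
    obtain ⟨s, hs⟩ := hloc k _ hnJ
    have h3 : x * s = z * e k := by
      rw [← ha', mul_assoc, mul_assoc, ← mul_assoc (e k), hs]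
    rw [← h3]
    exact mul_mem_right_sub X hxX _

theorem extend_all {R : Type u} [Ring R] (hart : IsArtinian Rᵐᵒᵖ R) (hnoe : IsNoetherian Rᵐᵒᵖ R)
    (hser : RightSerial R) (hsq : JacobsonSquareZero R)
    {M : Type u} [AddCommGroup M] [Module Rᵐᵒᵖ M] (hM : IsMininjective R M)
    (N : Submodule Rᵐᵒᵖ R) :
    ∀ f : R →ₗ.[Rᵐᵒᵖ] M, f.domain = N → ∃ G : R →ₗ[Rᵐᵒᵖ] M, ∀ x : f.domain, G x = f x := by
  obtain ⟨n, c, hInternal, huni⟩ := hser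
  induction N using WellFoundedGT.induction with
  | ind N ih =>
  intro f hf
  by_cases htop : N = ⊤
  · refine ⟨f.toFun ∘ₗ (LinearMap.codRestrict f.domain LinearMap.id
      (fun x => by rw [hf, htop]; trivial)), fun x => rfl⟩
  have hex : ∃ i, ¬ c i ≤ N := by
    by_contra hcon
    push Not at hcon
    apply htop
    rw [eq_top_iff, ← hInternal.submodule_iSup_eq_top]
    exact iSup_le hcon
  obtain ⟨i, hi⟩ := hex
  obtain ⟨G, hG⟩ : ∃ G : R →ₗ[Rᵐᵒᵖ] M, ∀ x (hx : x ∈ f.domain), x ∈ c i → G x = f ⟨x, hx⟩ := by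
    rcases bot_or_atom hart hsq (huni i) (L := c i ⊓ N) inf_le_left
      (fun h => hi (h.trans inf_le_right)) with h | h
    · refine ⟨0, fun x hx hxc => ?_⟩
      have hx0 : x ∈ (⊥ : Submodule Rᵐᵒᵖ R) := by
        rw [← h]
        exact ⟨hxc, hf ▸ hx⟩
      rw [Submodule.mem_bot] at hx0
      subst hx0
      exact (map_zero f.toFun).symm
    · obtain ⟨G, hG⟩ := hM _ h (f.toFun ∘ₗ Submodule.inclusion (inf_le_right.trans hf.ge))
      exact ⟨G, fun x hx hxc => hG ⟨x, hxc, hf ▸ hx⟩⟩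
  let g : R →ₗ.[Rᵐᵒᵖ] M := ⟨c i, G.domRestrict (c i)⟩
  have hfg : ∀ (x : f.domain) (y : g.domain), (x : R) = y → f x = g y := by
    rintro ⟨x, hx⟩ ⟨y, hy⟩ hxy
    have hxy' : x = y := hxy
    subst hxy'
    exact (hG x hx hy).symm
  have hlt : N < (f.sup g hfg).domain := by
    rw [LinearPMap.domain_sup, hf]
    exact left_lt_sup.mpr hi
  obtain ⟨G', hG'⟩ := ih _ hlt (f.sup g hfg) rfl
  refine ⟨G', fun x => ?_⟩
  have hle := LinearPMap.left_le_sup f g hfg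
  rw [hle.2 (x := x) (y := ⟨x, hle.1 x.2⟩) rfl, ← hG']

theorem backward_dir {R : Type u} [Ring R] (hart : IsArtinian Rᵐᵒᵖ R)
    (hser : RightSerial R) (hsq : JacobsonSquareZero R)
    (M : Type u) [AddCommGroup M] [Module Rᵐᵒᵖ M] (hM : IsMininjective R M) :
    Module.Injective Rᵐᵒᵖ M := by
  let φ : R ≃ₗ[Rᵐᵒᵖ] Rᵐᵒᵖ :=
    { opAddEquiv with map_smul' := fun r x => by simp }
  have h1 : IsArtinianRing Rᵐᵒᵖ := (LinearEquiv.isArtinian_iff φ).mp hart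
  have h2 : IsNoetherianRing Rᵐᵒᵖ := inferInstance
  have hnoe : IsNoetherian Rᵐᵒᵖ R := (LinearEquiv.isNoetherian_iff φ).mpr h2
  apply Module.Baer.injective
  intro I g
  obtain ⟨G, hG⟩ := extend_all hart hnoe hser hsq hM _
    ⟨Submodule.comap φ.toLinearMap I, g ∘ₗ φ.toLinearMap.restrict (fun x hx => hx)⟩ rfl
  refine ⟨G ∘ₗ φ.symm.toLinearMap, fun x hx => ?_⟩
  exact hG ⟨φ.symm x, hx⟩

end PartE




/-- If every minimal right ideal of `R` is almost injective, then every
mininjective right `R`-module is injective iff `R` is a right Artinian serial ring with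
`J(R)² = 0`. -/
theorem mininjective_injective_iff_artinian_serial (R : Type u) [Ring R]
    (hmin : ∀ I : Submodule Rᵐᵒᵖ R, IsAtom I → IsAlmostInjective.{u, u, u} R ↥I) :
    (∀ (M : Type u) [AddCommGroup M] [Module Rᵐᵒᵖ M],
        IsMininjective R M → Module.Injective Rᵐᵒᵖ M) ↔
      (IsArtinian Rᵐᵒᵖ R ∧ RightSerial R ∧ LeftSerial R ∧ JacobsonSquareZero R) := by
  exact ⟨fun h => forward_dir hmin h,
    fun h M _ _ hM => backward_dir h.1 h.2.1 h.2.2.2 M hM⟩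
end

section
/- Let R be a ring. The following statements are equivalent: (1) R is quasi-Frobenius; (2) every mininjective right R-module is projective; (3) every min-flat left R-module is injective. -/
universe u v w v'

open MulOpposite

section MinFlat
variable (R : Type u) [Ring R] (M : Type v) [AddCommGroup M] [Module R M]

/-- The balancing relations inside `I ⊗_ℤ M` defining the tensor product `I ⊗_R M`
of the right ideal `I` with the left module `M` over the (possibly noncommutative)
ring `R`. -/
def minflatBalance (I : Submodule Rᵐᵒᵖ R) : Submodule ℤ (TensorProduct ℤ ↥I M) :=
  Submodule.span ℤ {t | ∃ (x : ↥I) (r : R) (m : M),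
    t = (MulOpposite.op r • x) ⊗ₜ[ℤ] m - x ⊗ₜ[ℤ] (r • m)}

/-- The additive map `I ⊗_ℤ M → M` sending `x ⊗ m` to `x • m`. -/
noncomputable def minflatAux (I : Submodule Rᵐᵒᵖ R) : TensorProduct ℤ ↥I M →+ M :=
  TensorProduct.liftAddHom
    { toFun := fun x => DistribMulAction.toAddMonoidHom M (x : R)
      map_zero' := by ext m; simp
      map_add' := fun x y => by ext m; exact add_smul (x : R) (y : R) m }
    (fun n x m => by
      show ((n • x : ↥I) : R) • m = (x : R) • (n • m)
      have hcoe : ((n • x : ↥I) : R) = n • (x : R) := rfl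
      rw [hcoe, zsmul_eq_mul, mul_smul, Int.cast_smul_eq_zsmul, smul_comm])

lemma minflatBalance_le_ker (I : Submodule Rᵐᵒᵖ R) :
    minflatBalance R M I ≤ LinearMap.ker (minflatAux R M I).toIntLinearMap := by
  rw [minflatBalance, Submodule.span_le]
  rintro t ⟨x, r, m, rfl⟩
  simp only [SetLike.mem_coe, LinearMap.mem_ker, AddMonoidHom.coe_toIntLinearMap, map_sub]
  have h1 : minflatAux R M I ((MulOpposite.op r • x) ⊗ₜ[ℤ] m)
      = ((MulOpposite.op r • x : ↥I) : R) • m := by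
    simp [minflatAux, TensorProduct.liftAddHom_tmul]
  have h2 : minflatAux R M I (x ⊗ₜ[ℤ] (r • m)) = (x : R) • (r • m) := by
    simp [minflatAux, TensorProduct.liftAddHom_tmul]
  rw [h1, h2, Submodule.coe_smul, MulOpposite.smul_eq_mul_unop, MulOpposite.unop_op, mul_smul,
    sub_self]

/-- A left `R`-module `M` is min-flat if for every minimal right ideal `I` of `R`
the canonical map `I ⊗_R M → M` is injective. -/
def IsMinFlat : Prop :=
  ∀ I : Submodule Rᵐᵒᵖ R, IsAtom I →
    Function.Injective
      (Submodule.liftQ (minflatBalance R M I) (minflatAux R M I).toIntLinearMap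
        (minflatBalance_le_ker R M I))

end MinFlat

section QFHull
variable {R : Type u} [Ring R]

theorem qf_ext {Q : Type u} [AddCommGroup Q] [Module R Q] (hQ : Module.Injective R Q)
    {A B : Type u} [AddCommGroup A] [Module R A] [AddCommGroup B] [Module R B]
    (i : A →ₗ[R] B) (hi : Function.Injective i) (g : A →ₗ[R] Q) :
    ∃ k : B →ₗ[R] Q, ∀ a, k (i a) = g a := hQ.out i hi g

/-- maps into an injective module factor through any map with smaller kernel -/
theorem qf_factor {Q : Type u} [AddCommGroup Q] [Module R Q] (hQ : Module.Injective R Q)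
    {A B : Type u} [AddCommGroup A] [Module R A] [AddCommGroup B] [Module R B]
    (h : A →ₗ[R] B) (g : A →ₗ[R] Q) (hk : LinearMap.ker h ≤ LinearMap.ker g) :
    ∃ k : B →ₗ[R] Q, ∀ a, k (h a) = g a := by
  obtain ⟨k, hk'⟩ := qf_ext hQ ((LinearMap.ker h).liftQ h le_rfl)
    (LinearMap.ker_eq_bot.mp (Submodule.ker_liftQ_eq_bot _ _ _ le_rfl))
    ((LinearMap.ker h).liftQ g hk)
  refine ⟨k, fun a => ?_⟩
  simpa using hk' (Submodule.Quotient.mk a)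

theorem qf_inj_retract {E Q : Type u} [AddCommGroup Q] [Module R Q] [AddCommGroup E] [Module R E]
    (hQ : Module.Injective R Q) (i : E →ₗ[R] Q) (p : Q →ₗ[R] E) (hpi : ∀ x, p (i x) = x) :
    Module.Injective R E := by
  refine ⟨fun X Y _ _ _ _ f hf g => ?_⟩
  obtain ⟨k, hk⟩ := qf_ext hQ f hf (i ∘ₗ g)
  exact ⟨p ∘ₗ k, fun x => by simp [hk, hpi]⟩

theorem qf_proj_retract {E Q : Type u} [AddCommGroup Q] [Module R Q] [AddCommGroup E] [Module R E]
    (hQ : Module.Projective R Q) (i : E →ₗ[R] Q) (p : Q →ₗ[R] E) (hpi : ∀ x, p (i x) = x) :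
    Module.Projective R E :=
  Module.Projective.of_split i p (LinearMap.ext hpi)

/-- retraction from a complement -/
theorem qf_compl_retract {Q : Type u} [AddCommGroup Q] [Module R Q] {E K : Submodule R Q}
    (h : IsCompl E K) : ∃ p : Q →ₗ[R] E, (∀ x : E, p x = x) ∧ ∀ x ∈ K, p x = 0 :=
  ⟨E.projectionOnto K h, fun x => Submodule.projectionOnto_apply_left h x,
    fun x hx => Submodule.projectionOnto_apply_right h ⟨x, hx⟩⟩

/-- elementwise essentiality -/
def QFEss {Q : Type u} [AddCommGroup Q] [Module R Q] (S E : Submodule R Q) : Prop :=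
  ∀ x ∈ E, x ≠ 0 → ∃ r : R, r • x ∈ S ∧ r • x ≠ 0

theorem qf_exists_hull {Q : Type u} [AddCommGroup Q] [Module R Q] (hQ : Module.Injective R Q)
    (S : Submodule R Q) : ∃ E K : Submodule R Q, S ≤ E ∧ QFEss S E ∧ IsCompl E K := by
  obtain ⟨E, hSE, hEmax⟩ := zorn_le_nonempty₀ {E : Submodule R Q | S ≤ E ∧ QFEss S E} (by
    intro c hc hchain y hy
    refine ⟨sSup c, ⟨(hc hy).1.trans (le_sSup hy), ?_⟩, fun z hz => le_sSup hz⟩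
    intro x hx hx0
    obtain ⟨N, hN, hxN⟩ := (Submodule.mem_sSup_of_directed ⟨y, hy⟩ hchain.directedOn).mp hx
    exact (hc hN).2 x hxN hx0) S ⟨le_rfl, fun x hx h0 => ⟨1, by simpa using hx, by simpa using h0⟩⟩
  obtain ⟨hE1, hE2⟩ := hEmax.prop
  obtain ⟨K, -, hKmax⟩ := zorn_le_nonempty₀ {K : Submodule R Q | Disjoint E K} (by
    intro c hc hchain y hy
    refine ⟨sSup c, ?_, fun z hz => le_sSup hz⟩
    change Disjoint E (sSup c)
    rw [Submodule.disjoint_def]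
    intro x hxE hx
    obtain ⟨N, hN, hxN⟩ := (Submodule.mem_sSup_of_directed ⟨y, hy⟩ hchain.directedOn).mp hx
    exact (Submodule.disjoint_def.mp (hc hN)) x hxE hxN) ⊥ disjoint_bot_right
  have hdis : Disjoint E K := hKmax.prop
  have hdis' := Submodule.disjoint_def.mp hdis
  have key : ∀ x, x ∉ K → ∃ r : R, ∃ e ∈ E, ∃ k ∈ K, r • x = e + k ∧ e ≠ 0 := by
    intro x hx
    by_contra hcon
    have hd : Disjoint E (K ⊔ Submodule.span R {x}) := by
      rw [Submodule.disjoint_def]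
      intro e he he'
      obtain ⟨k, hk, y, hy, hky⟩ := Submodule.mem_sup.mp he'
      obtain ⟨r, rfl⟩ := Submodule.mem_span_singleton.mp hy
      by_contra hne
      exact hcon ⟨r, e, he, -k, K.neg_mem hk, by rw [← hky]; abel, hne⟩
    have := hKmax.le_of_ge hd le_sup_left
    exact hx (this (Submodule.mem_sup_right (Submodule.mem_span_singleton_self x)))
  obtain ⟨g, hg⟩ := qf_ext hQ (K.mkQ ∘ₗ E.subtype) (by
    rw [← LinearMap.ker_eq_bot, LinearMap.ker_eq_bot']
    intro m hm
    have : (m : Q) ∈ K := by simpa using hm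
    exact Subtype.ext (hdis' _ m.2 this)) E.subtype
  set h : Q →ₗ[R] Q := g ∘ₗ K.mkQ with hh
  have hE : ∀ e ∈ E, h e = e := fun e he => hg ⟨e, he⟩
  have hK : ∀ k ∈ K, h k = 0 := fun k hk => by
    simp [hh, (Submodule.Quotient.mk_eq_zero K).mpr hk]
  have hrange : LinearMap.range h ≤ E := by
    refine hEmax.le_of_ge ⟨?_, ?_⟩ ?_
    · exact fun s hs => ⟨s, hE s (hE1 hs)⟩
    · rintro _ ⟨x, rfl⟩ hx0
      have hxK : x ∉ K := fun hx => hx0 (hK x hx)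
      obtain ⟨r, e, he, k, hk, hrx, hne⟩ := key x hxK
      obtain ⟨s, hs1, hs2⟩ := hE2 e he hne
      have : r • h x = e := by rw [← map_smul, hrx, map_add, hE e he, hK k hk, add_zero]
      exact ⟨s * r, by rwa [mul_smul, this], by rwa [mul_smul, this]⟩
    · exact fun s hs => ⟨s, hE s hs⟩
  refine ⟨E, K, hE1, hE2, hdis, ?_⟩
  rw [codisjoint_iff, eq_top_iff]
  intro x _
  have hx : x - h x ∈ K := by
    by_contra hxK
    obtain ⟨r, e, he, k, hk, hrx, hne⟩ := key _ hxK
    have h1 : h (r • (x - h x)) = 0 := by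
      rw [map_smul, map_sub, hE (h x) (hrange ⟨x, rfl⟩), sub_self, smul_zero]
    rw [hrx, map_add, hE e he, hK k hk, add_zero] at h1
    exact hne h1
  exact Submodule.mem_sup.mpr ⟨h x, hrange ⟨x, rfl⟩, x - h x, hx, by abel⟩

/-- injective, projective and uniform -/
structure QFBil (R : Type u) [Ring R] (E : Type u) [AddCommGroup E] [Module R E] : Prop where
  inj : Module.Injective R E
  proj : Module.Projective R E
  unif : ∀ N N' : Submodule R E, N ⊓ N' = ⊥ → N = ⊥ ∨ N' = ⊥

theorem qf_bil_surj {E E' : Type u} [AddCommGroup E] [Module R E] [AddCommGroup E'] [Module R E']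
    [Nontrivial E] (hE : QFBil R E) (hE' : QFBil R E') (f : E →ₗ[R] E')
    (hf : Function.Injective f) : Function.Surjective f := by
  obtain ⟨p, hp⟩ := qf_ext hE.inj f hf LinearMap.id
  have h1 : LinearMap.range f ⊓ LinearMap.ker p = ⊥ := by
    rw [eq_bot_iff]
    rintro _ ⟨⟨x, rfl⟩, hx⟩
    have : x = 0 := by rw [← LinearMap.id_apply (R := R) x, ← hp x]; exact hx
    simp [this]
  rcases hE'.unif _ _ h1 with h | h
  · obtain ⟨x, hx⟩ := exists_ne (0 : E)
    rw [LinearMap.range_eq_bot] at h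
    exact absurd (hf (a₁ := x) (a₂ := 0) (by simp [h])) hx
  · intro y
    refine ⟨p y, ?_⟩
    have : y - f (p y) ∈ LinearMap.ker p := by simp [hp]
    rw [h, Submodule.mem_bot, sub_eq_zero] at this
    exact this.symm

theorem qf_bil_local {E : Type u} [AddCommGroup E] [Module R E] (hE : QFBil R E)
    (M N : Submodule R E) (h : M ⊔ N = ⊤) : M = ⊤ ∨ N = ⊤ := by
  rcases subsingleton_or_nontrivial E with hs | hs
  · left; exact Subsingleton.elim _ _
  let c : (M × N) →ₗ[R] E := M.subtype.coprod N.subtype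
  have hc : Function.Surjective c := by
    intro x
    have hx : x ∈ M ⊔ N := h ▸ Submodule.mem_top
    obtain ⟨y, hy, z, hz, hyz⟩ := Submodule.mem_sup.mp hx
    exact ⟨(⟨y, hy⟩, ⟨z, hz⟩), by simpa [c] using hyz⟩
  have := hE.proj
  obtain ⟨s, hs'⟩ := Module.projective_lifting_property c LinearMap.id hc
  let a : E →ₗ[R] E := M.subtype ∘ₗ LinearMap.fst R M N ∘ₗ s
  let b : E →ₗ[R] E := N.subtype ∘ₗ LinearMap.snd R M N ∘ₗ s
  have hab : ∀ x, a x + b x = x := fun x => by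
    have := LinearMap.congr_fun hs' x
    simpa [c, a, b] using this
  have h1 : LinearMap.ker a ⊓ LinearMap.ker b = ⊥ := by
    rw [eq_bot_iff]
    rintro x ⟨hx, hx'⟩
    have hx1 : a x = 0 := hx
    have hx2 : b x = 0 := hx'
    rw [Submodule.mem_bot, ← hab x, hx1, hx2, add_zero]
  rcases hE.unif _ _ h1 with h | h
  · left
    have := qf_bil_surj hE hE a (LinearMap.ker_eq_bot.mp h)
    rw [eq_top_iff]
    intro x _
    obtain ⟨y, rfl⟩ := this x
    exact (s y).1.2
  · right
    have := qf_bil_surj hE hE b (LinearMap.ker_eq_bot.mp h)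
    rw [eq_top_iff]
    intro x _
    obtain ⟨y, rfl⟩ := this x
    exact (s y).2.2

theorem qf_bil_tops {E U U' : Type u} [AddCommGroup E] [Module R E] (hE : QFBil R E)
    [AddCommGroup U] [Module R U] [AddCommGroup U'] [Module R U'] [IsSimpleModule R U]
    [IsSimpleModule R U'] (p : E →ₗ[R] U) (hp : Function.Surjective p)
    (p' : E →ₗ[R] U') (hp' : Function.Surjective p') : Nonempty (U ≃ₗ[R] U') := by
  have c := LinearMap.isCoatom_ker_of_surjective hp
  have c' := LinearMap.isCoatom_ker_of_surjective hp'
  have : LinearMap.ker p = LinearMap.ker p' := by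
    by_contra hne
    have hsup := c.sup_eq_top_of_ne c' hne
    rcases qf_bil_local hE _ _ hsup with h | h
    · exact c.1 h
    · exact c'.1 h
  exact ⟨(p.quotKerEquivOfSurjective hp).symm.trans
    ((Submodule.quotEquivOfEq _ _ this).trans (p'.quotKerEquivOfSurjective hp'))⟩

theorem qf_bil_iso_of_top {E E' U : Type u} [AddCommGroup E] [Module R E] (hE : QFBil R E)
    [AddCommGroup E'] [Module R E'] (hE' : QFBil R E')
    [AddCommGroup U] [Module R U] [IsSimpleModule R U]
    (p : E →ₗ[R] U) (hp : Function.Surjective p)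
    (p' : E' →ₗ[R] U) (hp' : Function.Surjective p') : Nonempty (E ≃ₗ[R] E') := by
  have := hE.proj
  have := hE'.proj
  have hU : Nontrivial U := IsSimpleModule.nontrivial R U
  have : Nontrivial E' := hp'.nontrivial
  obtain ⟨f, hf⟩ := Module.projective_lifting_property p' p hp'
  have hsup : LinearMap.range f ⊔ LinearMap.ker p' = ⊤ := by
    rw [eq_top_iff]
    intro y _
    obtain ⟨x, hx⟩ := hp (p' y)
    refine Submodule.mem_sup.mpr ⟨f x, ⟨x, rfl⟩, y - f x, ?_, by abel⟩
    have : p' (f x) = p x := LinearMap.congr_fun hf x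
    simp [this, hx]
  have hfs : Function.Surjective f := by
    rcases qf_bil_local hE' _ _ hsup with h | h
    · exact LinearMap.range_eq_top.mp h
    · exact absurd h (LinearMap.isCoatom_ker_of_surjective hp').1
  obtain ⟨s, hs⟩ := Module.projective_lifting_property f LinearMap.id hfs
  have hsinj : Function.Injective s :=
    Function.LeftInverse.injective (g := f) fun x => LinearMap.congr_fun hs x
  exact ⟨(LinearEquiv.ofBijective s ⟨hsinj, qf_bil_surj hE' hE s hsinj⟩).symm⟩

theorem qf_bil_iso_of_soc {E E' T : Type u} [AddCommGroup E] [Module R E] (hE : QFBil R E)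
    [AddCommGroup E'] [Module R E'] (hE' : QFBil R E')
    [AddCommGroup T] [Module R T] [Nontrivial T]
    (i : T →ₗ[R] E) (hi : Function.Injective i)
    (i' : T →ₗ[R] E') (hi' : Function.Injective i') : Nonempty (E ≃ₗ[R] E') := by
  have : Nontrivial E := hi.nontrivial
  obtain ⟨f, hf⟩ := qf_ext hE'.inj i hi i'
  have h1 : LinearMap.ker f ⊓ LinearMap.range i = ⊥ := by
    rw [eq_bot_iff]
    rintro _ ⟨hx, ⟨x, rfl⟩⟩
    have h0 : i' x = 0 := by rw [← hf x]; exact hx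
    have : x = 0 := hi' (by simpa using h0)
    simp [this]
  have hinj : Function.Injective f := by
    rcases hE.unif _ _ h1 with h | h
    · exact LinearMap.ker_eq_bot.mp h
    · rw [LinearMap.range_eq_bot] at h
      obtain ⟨x, hx⟩ := exists_ne (0 : T)
      exact absurd (hi (a₁ := x) (a₂ := 0) (by simp [h])) hx
  exact ⟨LinearEquiv.ofBijective f ⟨hinj, qf_bil_surj hE hE' f hinj⟩⟩

theorem qf_bil_socs {E T T' : Type u} [AddCommGroup E] [Module R E] (hE : QFBil R E)
    [AddCommGroup T] [Module R T] [AddCommGroup T'] [Module R T'] [IsSimpleModule R T]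
    [IsSimpleModule R T'] (i : T →ₗ[R] E) (hi : Function.Injective i)
    (i' : T' →ₗ[R] E) (hi' : Function.Injective i') : Nonempty (T ≃ₗ[R] T') := by
  have e := LinearEquiv.ofInjective i hi
  have e' := LinearEquiv.ofInjective i' hi'
  have s1 : IsSimpleModule R (LinearMap.range i) := IsSimpleModule.congr e.symm
  have s2 : IsSimpleModule R (LinearMap.range i') := IsSimpleModule.congr e'.symm
  have a1 := isSimpleModule_iff_isAtom.mp s1
  have a2 := isSimpleModule_iff_isAtom.mp s2
  have : LinearMap.range i = LinearMap.range i' := by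
    by_contra hne
    have := a1.disjoint_of_ne a2 hne
    rcases hE.unif _ _ this.eq_bot with h | h
    · exact a1.1 h
    · exact a2.1 h
  exact ⟨e.trans ((LinearEquiv.ofEq _ _ this).trans e'.symm)⟩

/-- `T` is the socle and `U` the top of a common injective projective uniform module -/
def QFLink (R : Type u) [Ring R] (T U : Type u) [AddCommGroup T] [Module R T]
    [AddCommGroup U] [Module R U] : Prop :=
  ∃ (E : Type u) (_ : AddCommGroup E) (_ : Module R E), QFBil R E ∧
    (∃ i : T →ₗ[R] E, Function.Injective i) ∧ ∃ p : E →ₗ[R] U, Function.Surjective p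

theorem QFLink.congr {T U T' U' : Type u} [AddCommGroup T] [Module R T]
    [AddCommGroup U] [Module R U] [AddCommGroup T'] [Module R T']
    [AddCommGroup U'] [Module R U'] (e : T ≃ₗ[R] T') (f : U ≃ₗ[R] U')
    (h : QFLink R T U) : QFLink R T' U' := by
  obtain ⟨E, i1, i2, hE, ⟨i, hi⟩, p, hp⟩ := h
  exact ⟨E, i1, i2, hE, ⟨i ∘ₗ e.symm.toLinearMap, hi.comp e.symm.injective⟩,
    f.toLinearMap ∘ₗ p, f.surjective.comp hp⟩

theorem QFLink.top_unique {T U U' : Type u} [AddCommGroup T] [Module R T]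
    [AddCommGroup U] [Module R U] 
    [AddCommGroup U'] [Module R U'] [IsSimpleModule R T] [IsSimpleModule R U]
    [IsSimpleModule R U'] (h : QFLink R T U) (h' : QFLink R T U') : Nonempty (U ≃ₗ[R] U') := by
  obtain ⟨E, i1, i2, hE, ⟨i, hi⟩, p, hp⟩ := h
  obtain ⟨E', i1', i2', hE', ⟨i', hi'⟩, p', hp'⟩ := h'
  have := IsSimpleModule.nontrivial R T
  obtain ⟨e⟩ := qf_bil_iso_of_soc hE hE' i hi i' hi'
  exact qf_bil_tops hE p hp (p' ∘ₗ e.toLinearMap) (hp'.comp e.surjective)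

theorem QFLink.soc_unique {T U T' : Type u} [AddCommGroup T] [Module R T]
    [AddCommGroup U] [Module R U] 
    [AddCommGroup T'] [Module R T'] [IsSimpleModule R T] [IsSimpleModule R U]
    [IsSimpleModule R T'] (h : QFLink R T U) (h' : QFLink R T' U) : Nonempty (T ≃ₗ[R] T') := by
  obtain ⟨E, i1, i2, hE, ⟨i, hi⟩, p, hp⟩ := h
  obtain ⟨E', i1', i2', hE', ⟨i', hi'⟩, p', hp'⟩ := h'
  obtain ⟨e⟩ := qf_bil_iso_of_top hE hE' p hp p' hp'
  have hres := qf_bil_socs hE' (e.toLinearMap ∘ₗ i) (e.injective.comp hi) i' hi'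
  exact hres

/-- the hull of a simple submodule of an injective projective module -/
theorem qf_hull_bil {Q : Type u} [AddCommGroup Q] [Module R Q] (hQ : Module.Injective R Q)
    (hP : Module.Projective R Q) (T : Submodule R Q) [IsSimpleModule R T] :
    ∃ E K : Submodule R Q, T ≤ E ∧ QFEss T E ∧ IsCompl E K ∧ QFBil R E := by
  obtain ⟨E, K, hTE, hess, hc⟩ := qf_exists_hull hQ T
  obtain ⟨p, hp, -⟩ := qf_compl_retract hc
  refine ⟨E, K, hTE, hess, hc, qf_inj_retract hQ E.subtype p hp,
    qf_proj_retract hP E.subtype p hp, ?_⟩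
  have a := isSimpleModule_iff_isAtom.mp (inferInstance : IsSimpleModule R T)
  have key : ∀ N : Submodule R E, N ≠ ⊥ → T ≤ N.map E.subtype := by
    intro N hN
    obtain ⟨x, hx, hx0⟩ := N.exists_mem_ne_zero_of_ne_bot hN
    obtain ⟨r, hr, hr0⟩ := hess x x.2 (by simpa using hx0)
    have hne : T ⊓ N.map E.subtype ≠ ⊥ := by
      intro h
      have : r • (x : Q) ∈ T ⊓ N.map E.subtype :=
        ⟨hr, ⟨r • x, N.smul_mem r hx, rfl⟩⟩
      rw [h] at this
      exact hr0 this
    rcases a.le_iff.mp (inf_le_left : T ⊓ N.map E.subtype ≤ T) with h | h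
    · exact absurd h hne
    · exact inf_eq_left.mp h
  intro N N' h
  by_contra hcon
  push Not at hcon
  have h1 := le_inf (key N hcon.1) (key N' hcon.2)
  rw [← Submodule.map_inf _ E.injective_subtype, h, Submodule.map_bot, le_bot_iff] at h1
  exact a.1 h1

/-- a bil module with a simple submodule is a retract of `R` -/
theorem qf_bil_in_ring {E T : Type u} [AddCommGroup E] [Module R E] (hE : QFBil R E)
    [AddCommGroup T] [Module R T] [IsSimpleModule R T]
    (i : T →ₗ[R] E) (hi : Function.Injective i) :
    ∃ (c : E →ₗ[R] R) (p : R →ₗ[R] E), (∀ x, p (c x) = x) := by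
  obtain ⟨s, hs⟩ := hE.proj
  have := IsSimpleModule.nontrivial R T
  obtain ⟨t, ht⟩ := exists_ne (0 : T)
  have hst : s (i t) ≠ 0 := by
    intro h
    have := hs (i t)
    rw [h, map_zero] at this
    exact ht (hi (by rw [← this, map_zero]))
  obtain ⟨j, hj⟩ := Finsupp.ne_iff.mp hst
  let c : E →ₗ[R] R := Finsupp.lapply j ∘ₗ s
  have hcT : Function.Injective (c ∘ₗ i) :=
    LinearMap.injective_of_ne_zero (fun h => hj (by simpa [c] using LinearMap.congr_fun h t))
  have h1 : LinearMap.ker c ⊓ LinearMap.range i = ⊥ := by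
    rw [eq_bot_iff]
    rintro _ ⟨hx, ⟨x, rfl⟩⟩
    have : x = 0 := hcT (by rw [map_zero]; exact hx)
    simp [this]
  have hcinj : Function.Injective c := by
    rcases hE.unif _ _ h1 with h | h
    · exact LinearMap.ker_eq_bot.mp h
    · rw [LinearMap.range_eq_bot] at h
      exact absurd (hi (a₁ := t) (a₂ := 0) (by simp [h])) ht
  obtain ⟨p, hp⟩ := qf_ext hE.inj c hcinj LinearMap.id
  exact ⟨c, p, hp⟩

end QFHull

section QFPigeon
variable (R : Type u) [Ring R]

/-- maximal left ideals up to isomorphism of the quotient -/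
def qfSetoid : Setoid {m : Ideal R // m.IsMaximal} where
  r a b := Nonempty ((R ⧸ a.1) ≃ₗ[R] (R ⧸ b.1))
  iseqv := ⟨fun _ => ⟨LinearEquiv.refl R _⟩, fun ⟨e⟩ => ⟨e.symm⟩, fun ⟨e⟩ ⟨f⟩ => ⟨e.trans f⟩⟩

/-- isomorphism types of simple modules -/
def QFTypes : Type u := Quotient (qfSetoid R)

variable {R}

theorem qf_simple_quot {m : Ideal R} (h : m.IsMaximal) : IsSimpleModule R (R ⧸ m) :=
  isSimpleModule_iff_isCoatom.mpr h.out

theorem qf_type_of (U : Type u) [AddCommGroup U] [Module R U] [IsSimpleModule R U] :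
    ∃ m : {m : Ideal R // m.IsMaximal}, Nonempty (U ≃ₗ[R] (R ⧸ m.1)) := by
  obtain ⟨I, hI, e⟩ := isSimpleModule_iff_quot_maximal.mp (inferInstance : IsSimpleModule R U)
  exact ⟨⟨I, hI⟩, e⟩

theorem qf_types_finite {N : Type u} [AddCommGroup N] [Module R N] [IsNoetherian R N]
    (h : ∀ (U : Type u) [AddCommGroup U] [Module R U] [IsSimpleModule R U],
      ∃ f : U →ₗ[R] N, Function.Injective f) : Finite (QFTypes R) := by
  have key : ∀ x : QFTypes R, ∃ S : Submodule R N, IsSimpleModule R S ∧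
      Nonempty (S ≃ₗ[R] (R ⧸ (Quotient.out x).1)) := by
    intro x
    have := qf_simple_quot (Quotient.out x).2
    obtain ⟨f, hf⟩ := h (R ⧸ (Quotient.out x).1)
    let e := LinearEquiv.ofInjective f hf
    exact ⟨LinearMap.range f, IsSimpleModule.congr e.symm, ⟨e.symm⟩⟩
  choose S hS e using key
  let F : QFTypes R → isotypicComponents R N :=
    fun x => ⟨isotypicComponent R N (S x), S x, hS x, rfl⟩
  refine Finite.of_injective F ?_
  intro x y hxy
  have hxy' : isotypicComponent R N (S x) = isotypicComponent R N (S y) :=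
    congrArg Subtype.val hxy
  have := hS x
  have := hS y
  have le : S x ≤ isotypicComponent R N (S y) := hxy' ▸ (S x).le_isotypicComponent
  obtain ⟨i⟩ := isIsotypicOfType_submodule_iff.mp (.isotypicComponent R N (S y)) _ le
  obtain ⟨ex⟩ := e x
  obtain ⟨ey⟩ := e y
  have : (qfSetoid R).r (Quotient.out x) (Quotient.out y) := ⟨(ex.symm.trans i).trans ey⟩
  have h2 := Quotient.sound (s := qfSetoid R) this
  exact (Quotient.out_eq x).symm.trans (h2.trans (Quotient.out_eq y))

/-- relation on types -/
def QFLinkT (x y : QFTypes R) : Prop :=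
  QFLink R (R ⧸ (Quotient.out x).1) (R ⧸ (Quotient.out y).1)

theorem qf_types_eq {x y : QFTypes R}
    (h : Nonempty ((R ⧸ (Quotient.out x).1) ≃ₗ[R] (R ⧸ (Quotient.out y).1))) : x = y := by
  have h2 := Quotient.sound (s := qfSetoid R) (show (qfSetoid R).r _ _ from h)
  exact (Quotient.out_eq x).symm.trans (h2.trans (Quotient.out_eq y))

theorem qf_type_exists (U : Type u) [AddCommGroup U] [Module R U] [IsSimpleModule R U] :
    ∃ x : QFTypes R, Nonempty (U ≃ₗ[R] (R ⧸ (Quotient.out x).1)) := by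
  obtain ⟨m, ⟨e⟩⟩ := qf_type_of (R := R) U
  refine ⟨Quotient.mk (qfSetoid R) m, ?_⟩
  obtain ⟨f⟩ := Quotient.mk_out (s := qfSetoid R) m
  exact ⟨e.trans f.symm⟩

theorem QFLinkT.top_unique {x y y' : QFTypes R} (h : QFLinkT x y) (h' : QFLinkT x y') :
    y = y' := by
  have := qf_simple_quot (Quotient.out x).2
  have := qf_simple_quot (Quotient.out y).2
  have := qf_simple_quot (Quotient.out y').2
  exact qf_types_eq (QFLink.top_unique h h')

theorem QFLinkT.soc_unique {x x' y : QFTypes R} (h : QFLinkT x y) (h' : QFLinkT x' y) :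
    x = x' := by
  have := qf_simple_quot (Quotient.out x).2
  have := qf_simple_quot (Quotient.out y).2
  have := qf_simple_quot (Quotient.out x').2
  exact qf_types_eq (QFLink.soc_unique h h')

theorem qf_pigeon_top [Finite (QFTypes R)]
    (h : ∀ (T : Type u) [AddCommGroup T] [Module R T] [IsSimpleModule R T],
      ∃ (U : Type u) (_ : AddCommGroup U) (_ : Module R U), IsSimpleModule R U ∧ QFLink R T U)
    (U : Type u) [AddCommGroup U] [Module R U] [IsSimpleModule R U] :
    ∃ (T : Type u) (_ : AddCommGroup T) (_ : Module R T), IsSimpleModule R T ∧ QFLink R T U := by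
  have key : ∀ x : QFTypes R, ∃ y : QFTypes R, QFLinkT x y := by
    intro x
    have := qf_simple_quot (Quotient.out x).2
    obtain ⟨V, _, _, hV, hl⟩ := h (R ⧸ (Quotient.out x).1)
    obtain ⟨y, ⟨e⟩⟩ := qf_type_exists (R := R) V
    exact ⟨y, hl.congr (LinearEquiv.refl R _) e⟩
  choose F hF using key
  have hinj : Function.Injective F := fun x x' hx => (hF x).soc_unique (hx ▸ hF x')
  have hsurj := Finite.injective_iff_surjective.mp hinj
  obtain ⟨y, ⟨e⟩⟩ := qf_type_exists (R := R) U
  obtain ⟨x, rfl⟩ := hsurj y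
  exact ⟨_, _, _, qf_simple_quot (Quotient.out x).2, (hF x).congr (LinearEquiv.refl R _) e.symm⟩

theorem qf_pigeon_soc [Finite (QFTypes R)]
    (h : ∀ (U : Type u) [AddCommGroup U] [Module R U] [IsSimpleModule R U],
      ∃ (T : Type u) (_ : AddCommGroup T) (_ : Module R T), IsSimpleModule R T ∧ QFLink R T U)
    (T : Type u) [AddCommGroup T] [Module R T] [IsSimpleModule R T] :
    ∃ (U : Type u) (_ : AddCommGroup U) (_ : Module R U), IsSimpleModule R U ∧ QFLink R T U := by
  have key : ∀ y : QFTypes R, ∃ x : QFTypes R, QFLinkT x y := by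
    intro x
    have := qf_simple_quot (Quotient.out x).2
    obtain ⟨V, _, _, hV, hl⟩ := h (R ⧸ (Quotient.out x).1)
    obtain ⟨y, ⟨e⟩⟩ := qf_type_exists (R := R) V
    exact ⟨y, hl.congr e (LinearEquiv.refl R _)⟩
  choose F hF using key
  have hinj : Function.Injective F := fun x x' hx => (hF x).top_unique (hx ▸ hF x')
  have hsurj := Finite.injective_iff_surjective.mp hinj
  obtain ⟨y, ⟨e⟩⟩ := qf_type_exists (R := R) T
  obtain ⟨x, rfl⟩ := hsurj y
  exact ⟨_, _, _, qf_simple_quot (Quotient.out x).2, (hF x).congr e.symm (LinearEquiv.refl R _)⟩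

end QFPigeon

section QFChase
variable {S : Type u} [Ring S]

theorem qf_exists_injective (M : Type u) [AddCommGroup M] [Module S M] :
    ∃ (E : Type u) (_ : AddCommGroup E) (_ : Module S E), Module.Injective S E ∧
      ∃ i : M →ₗ[S] E, Function.Injective i := by
  let X := ModuleCat.of S M
  let Y := CategoryTheory.Injective.under X
  let f : X ⟶ Y := CategoryTheory.Injective.ι X
  have : CategoryTheory.Injective (ModuleCat.of S Y) :=
    inferInstanceAs (CategoryTheory.Injective (CategoryTheory.Injective.under X))
  exact ⟨Y, inferInstance, inferInstance, Module.injective_module_of_injective_object S Y,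
    f.hom, (ModuleCat.mono_iff_injective f).mp inferInstance⟩

/-- combinatorial core of the Chase argument -/
theorem qf_chase_aux (T : ℕ →o Ideal S) {V : Type u} [AddCommGroup V] [Module S V] {ι : Type u}
    (s : (ℕ → V) →ₗ[S] (ι →₀ S)) :
    ∃ (k n : ℕ) (J : Finset ι), ∀ c : V, (∀ t ∈ T n, t • c = 0) → ∀ j ∉ J,
      ∀ m, ∀ t ∈ T m, t * s (Pi.single k c) j = 0 := by
  classical
  by_contra hcon
  push Not at hcon
  choose C hC j hj m t ht hne using hcon
  let st : ℕ → ℕ × Finset ι := fun k => Nat.rec (0, ∅)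
    (fun k p => (max p.1 (m k p.1 p.2),
      p.2 ∪ {j k p.1 p.2} ∪ (s (Pi.single k (C k p.1 p.2))).support)) k
  have st_succ : ∀ k, st (k + 1) = (max (st k).1 (m k (st k).1 (st k).2),
      (st k).2 ∪ {j k (st k).1 (st k).2} ∪
        (s (Pi.single k (C k (st k).1 (st k).2))).support) := fun k => rfl
  let c : ℕ → V := fun k => C k (st k).1 (st k).2
  let jj : ℕ → ι := fun k => j k (st k).1 (st k).2
  have mono1 : Monotone fun k => (st k).1 := monotone_nat_of_le_succ fun k => by
    simp only [st_succ]; exact le_max_left _ _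
  have mono2 : Monotone fun k => (st k).2 := monotone_nat_of_le_succ fun k => by
    simp only [st_succ]
    exact Finset.subset_union_left.trans Finset.subset_union_left
  have jmem : ∀ k, jj k ∈ (st (k + 1)).2 := fun k => by
    simp only [st_succ]; simp [jj]
  have csupp : ∀ k, (s (Pi.single k (c k))).support ⊆ (st (k + 1)).2 := fun k => by
    simp only [st_succ]; exact Finset.subset_union_right
  have jnot : ∀ k, jj k ∉ (st k).2 := fun k => hj k _ _
  have tmem : ∀ k, t k (st k).1 (st k).2 ∈ T (st (k + 1)).1 := fun k => by
    refine T.monotone ?_ (ht k _ _)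
    simp only [st_succ]; exact le_max_right _ _
  have jinj : Function.Injective jj := by
    refine Function.Injective.of_lt_imp_ne fun a b hab h => ?_
    exact jnot b (h ▸ mono2 (Nat.succ_le_of_lt hab) (jmem a))
  have hsupp : ∀ k, jj k ∈ (s c).support := by
    intro k
    let tail : ℕ → V := fun i => if i ≤ k then 0 else c i
    have hdec : c = (∑ i ∈ Finset.range k, Pi.single i (c i)) + Pi.single k (c k) + tail := by
      rw [← Finset.sum_range_succ]
      ext i
      simp only [Pi.add_apply, Finset.sum_apply, Pi.single_apply, tail]
      rw [Finset.sum_ite_eq]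
      by_cases h : i ≤ k
      · simp [h, Nat.lt_succ_of_le h]
      · simp [h]
    have htail : t k (st k).1 (st k).2 • tail = 0 := by
      ext i
      simp only [Pi.smul_apply, tail]
      split_ifs with h
      · simp
      · exact hC i _ _ _ (T.monotone (mono1 (Nat.succ_le_of_lt (not_le.mp h))) (tmem k))
    have hhead : s (∑ i ∈ Finset.range k, Pi.single i (c i)) (jj k) = 0 := by
      rw [map_sum, Finsupp.finsetSum_apply]
      refine Finset.sum_eq_zero fun i hi => ?_
      by_contra h0
      exact jnot k (mono2 (Nat.succ_le_of_lt (Finset.mem_range.mp hi))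
        (csupp i (Finsupp.mem_support_iff.mpr h0)))
    rw [Finsupp.mem_support_iff]
    intro h0
    have h1 : t k (st k).1 (st k).2 * s c (jj k) =
        t k (st k).1 (st k).2 * s (Pi.single k (c k)) (jj k) := by
      rw [← smul_eq_mul, ← Finsupp.smul_apply, ← map_smul, hdec, smul_add, htail, add_zero,
        map_smul, map_add, Finsupp.smul_apply, Finsupp.add_apply, hhead, zero_add, smul_eq_mul,
        ← hdec]
    rw [h0, mul_zero] at h1
    exact hne k _ _ h1.symm
  exact Set.infinite_range_of_injective jinj
    ((s c).support.finite_toSet.subset (by rintro _ ⟨k, rfl⟩; exact hsupp k))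

theorem qf_chase (hIP : ∀ (M : Type u) [AddCommGroup M] [Module S M],
    Module.Injective S M → Module.Projective S M) : IsNoetherianRing S := by
  classical
  rw [isNoetherianRing_iff, ← monotone_stabilizes_iff_noetherian]
  intro T
  by_contra hcon
  push Not at hcon
  obtain ⟨E, _, _, hE, i, hi⟩ := qf_exists_injective (S := S) ((n : ℕ) → S ⧸ T n)
  let e : ℕ → E := fun n => i (Pi.single n (Submodule.Quotient.mk 1))
  have he : ∀ n t, t • e n = 0 ↔ t ∈ T n := by
    intro n t
    rw [← map_smul, map_eq_zero_iff i hi, ← Pi.single_smul, Pi.single_eq_zero_iff,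
      ← Submodule.Quotient.mk_smul, Submodule.Quotient.mk_eq_zero, smul_eq_mul, mul_one]
  have hB : Module.Injective S (ℕ → List S → E) := inferInstance
  obtain ⟨s, hs⟩ := hIP _ hB
  obtain ⟨k, n, J, hJ⟩ := qf_chase_aux T (V := List S → E) s
  obtain ⟨m, hm, hne⟩ := hcon n
  obtain ⟨t, ht, htn⟩ := SetLike.exists_of_lt ((T.monotone hm).lt_of_ne hne)
  let c : Set (List S) → List S → E := fun Y x => if x ∈ Y then e n else 0
  have hc : ∀ Y, ∀ t ∈ T n, t • c Y = 0 := by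
    intro Y t ht
    ext x
    simp only [Pi.smul_apply, c]
    split_ifs
    · exact (he n t).mpr ht
    · simp
  let F : Set (List S) → J → S := fun Y j => t * s (Pi.single k (c Y)) j
  have hF : Function.Injective F := by
    intro Y Y' h
    have h1 : t • s (Pi.single k (c Y)) = t • s (Pi.single k (c Y')) := by
      ext j
      by_cases hj : j ∈ J
      · exact congrFun h ⟨j, hj⟩
      · exact (hJ _ (hc Y) j hj m t ht).trans (hJ _ (hc Y') j hj m t ht).symm
    rw [← map_smul, ← map_smul] at h1
    have h2 := congrFun (hs.injective h1) k
    simp only [Pi.smul_apply, Pi.single_eq_same] at h2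
    ext x
    have h3 := congrFun h2 x
    have h4 : t • e n ≠ 0 := fun h => htn ((he n t).mp h)
    simp only [Pi.smul_apply, c] at h3
    by_cases hx : x ∈ Y <;> by_cases hx' : x ∈ Y' <;> simp [hx, hx', h4] at h3 ⊢
    exact h4 h3.symm
  let G : (J → S) → List S := fun f => List.ofFn (f ∘ (Fintype.equivFin J).symm)
  have hG : Function.Injective G := by
    intro f g h
    have := List.ofFn_injective h
    exact (Fintype.equivFin J).symm.surjective.injective_comp_right this
  exact Function.cantor_injective _ (hG.comp hF)

theorem qf_trace_injective
    (h : ∀ (U : Type u) [AddCommGroup U] [Module S U] [IsSimpleModule S U],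
      ∃ (E : Type u) (_ : AddCommGroup E) (_ : Module S E), Module.Injective S E ∧
        Module.Projective S E ∧ ∃ p : E →ₗ[S] U, Function.Surjective p) :
    Module.Injective S S := by
  let I : Ideal S :=
    { carrier := {a | ∃ (E : Type u) (_ : AddCommGroup E) (_ : Module S E),
        Module.Injective S E ∧ ∃ (f : E →ₗ[S] S) (e : E), f e = a}
      zero_mem' := ⟨PUnit, inferInstance, inferInstance,
        ⟨fun _ _ _ _ _ _ _ _ _ => ⟨0, fun _ => rfl⟩⟩, 0, 0, rfl⟩
      add_mem' := by
        rintro _ _ ⟨E, _, _, hE, f, e, rfl⟩ ⟨E', _, _, hE', f', e', rfl⟩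
        refine ⟨E × E', inferInstance, inferInstance, ⟨?_⟩, f.coprod f', (e, e'), by simp⟩
        intro X Y _ _ _ _ i hi g
        obtain ⟨k, hk⟩ := qf_ext hE i hi (LinearMap.fst S E E' ∘ₗ g)
        obtain ⟨k', hk'⟩ := qf_ext hE' i hi (LinearMap.snd S E E' ∘ₗ g)
        exact ⟨k.prod k', fun x => Prod.ext (hk x) (hk' x)⟩
      smul_mem' := by
        rintro c _ ⟨E, _, _, hE, f, e, rfl⟩
        exact ⟨E, _, _, hE, f, c • e, by simp⟩ }
  have hI : I = ⊤ := by
    by_contra hne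
    obtain ⟨m, hm, hIm⟩ := Ideal.exists_le_maximal I hne
    have := qf_simple_quot hm
    obtain ⟨E, _, _, hE, hP, p, hp⟩ := h (S ⧸ m)
    obtain ⟨f, hf⟩ := Module.projective_lifting_property m.mkQ p m.mkQ_surjective
    obtain ⟨x, hx⟩ := hp (m.mkQ 1)
    have h1 : f x ∈ m := hIm ⟨E, _, _, hE, f, x, rfl⟩
    have h2 : m.mkQ (f x) = m.mkQ 1 := by rw [← hx, ← hf]; rfl
    rw [Submodule.mkQ_apply, (Submodule.Quotient.mk_eq_zero m).mpr h1] at h2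
    exact hm.ne_top ((Ideal.eq_top_iff_one m).mpr ((Submodule.Quotient.mk_eq_zero m).mp h2.symm))
  obtain ⟨E, _, _, hE, f, e, hfe⟩ : (1 : S) ∈ I := hI ▸ Submodule.mem_top
  exact qf_inj_retract hE (LinearMap.toSpanSingleton S E e) f fun x => by simp [hfe]

theorem qf_selfinj (hIP : ∀ (M : Type u) [AddCommGroup M] [Module S M],
    Module.Injective S M → Module.Projective S M) : Module.Injective S S := by
  have := qf_chase hIP
  have key : ∀ (T : Type u) [AddCommGroup T] [Module S T] [IsSimpleModule S T],
      (∃ f : T →ₗ[S] S, Function.Injective f) ∧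
      ∃ (U : Type u) (_ : AddCommGroup U) (_ : Module S U), IsSimpleModule S U ∧
        QFLink S T U := by
    intro T _ _ _
    obtain ⟨Q, _, _, hQ, i, hi⟩ := qf_exists_injective (S := S) T
    let e := LinearEquiv.ofInjective i hi
    have : IsSimpleModule S (LinearMap.range i) := IsSimpleModule.congr e.symm
    obtain ⟨E, K, hTE, -, -, hE⟩ := qf_hull_bil hQ (hIP Q hQ) (LinearMap.range i)
    let j : T →ₗ[S] E := Submodule.inclusion hTE ∘ₗ e.toLinearMap
    have hj : Function.Injective j := (Submodule.inclusion_injective hTE).comp e.injective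
    obtain ⟨c, p, hcp⟩ := qf_bil_in_ring hE j hj
    refine ⟨⟨c ∘ₗ j, (Function.LeftInverse.injective hcp).comp hj⟩, ?_⟩
    have hp : Function.Surjective p := Function.LeftInverse.surjective hcp
    have : Module.Finite S E := Module.Finite.of_surjective p hp
    have := IsSimpleModule.nontrivial S T
    have : Nontrivial E := hj.nontrivial
    obtain ⟨m, hm, -⟩ := (IsCoatomic.eq_top_or_exists_le_coatom (⊥ : Submodule S E)).resolve_left
      bot_ne_top
    exact ⟨E ⧸ m, inferInstance, inferInstance, isSimpleModule_iff_isCoatom.mpr hm,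
      E, inferInstance, inferInstance, hE, ⟨j, hj⟩, m.mkQ, m.mkQ_surjective⟩
  have : Finite (QFTypes S) := qf_types_finite (N := S) fun U _ _ _ => (key U).1
  refine qf_trace_injective fun U _ _ _ => ?_
  obtain ⟨T, _, _, hT, E, _, _, hE, -, hp⟩ := qf_pigeon_top (fun T _ _ _ => (key T).2) U
  exact ⟨E, _, _, hE.inj, hE.proj, hp⟩

end QFChase

section QFSemiprimary
variable {T : Type u} [Ring T]

/-- DCC on finitely generated left ideals -/
def QFDcc (T : Type u) [Ring T] : Prop :=
  ∀ P : Ideal T → Prop, (∃ A : Ideal T, A.FG ∧ P A) →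
    ∃ A : Ideal T, A.FG ∧ P A ∧ ∀ B ≤ A, B.FG → P B → B = A

theorem qf_span_fg (y : T) : (Ideal.span {y}).FG := ⟨{y}, by simp [Ideal.span]⟩

theorem qf_dcc_semisimple (h : QFDcc T) : IsSemisimpleRing (T ⧸ Ring.jacobson T) := by
  set J := Ring.jacobson T with hJ
  set C : Ideal T := (sSup {m : Submodule T (T ⧸ J) | IsSimpleModule T m}).comap J.mkQ with hC
  have hJC : J ≤ C := by
    intro x hx
    rw [hC, Submodule.mem_comap, Submodule.mkQ_apply, (Submodule.Quotient.mk_eq_zero J).mpr hx]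
    exact Submodule.zero_mem _
  obtain ⟨A, hAfg, hAC, hAmin⟩ := h (fun A => A ⊔ C = ⊤) ⟨⊤, ⟨{1}, by simp⟩, by simp⟩
  have hAJ : A ≤ J := by
    by_contra hAJ
    obtain ⟨A', hA'fg, ⟨hA'A, hA'J⟩, hA'min⟩ := h (fun B => B ≤ A ∧ ¬ B ≤ J)
      ⟨A, hAfg, le_rfl, hAJ⟩
    have hspan : ∀ y ∈ A', y ∉ J → Ideal.span {y} = A' := by
      intro y hy hyJ
      have hle : Ideal.span {y} ≤ A' := (Ideal.span_singleton_le_iff_mem _).mpr hy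
      exact hA'min _ hle (qf_span_fg y) ⟨hle.trans hA'A, fun hh => hyJ (hh (Ideal.mem_span_singleton_self y))⟩
    have hatom : IsAtom (Submodule.map J.mkQ A') := by
      refine ⟨fun hbot => hA'J fun y hy => ?_, fun N hN => ?_⟩
      · have : J.mkQ y ∈ Submodule.map J.mkQ A' := ⟨y, hy, rfl⟩
        rw [hbot, Submodule.mem_bot] at this
        exact (Submodule.Quotient.mk_eq_zero J).mp this
      · by_contra hNb
        obtain ⟨z, hz, hz0⟩ := N.exists_mem_ne_zero_of_ne_bot hNb
        obtain ⟨y, hy, rfl⟩ := hN.le hz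
        have hyJ : y ∉ J := fun hh => hz0 ((Submodule.Quotient.mk_eq_zero J).mpr hh)
        refine hN.not_ge ?_
        rw [Submodule.map_le_iff_le_comap, ← hspan y hy hyJ, Ideal.span_singleton_le_iff_mem]
        exact hz
    have hA'C : A' ≤ C := by
      rw [hC, ← Submodule.map_le_iff_le_comap]
      exact le_sSup (isSimpleModule_iff_isAtom.mpr hatom)
    obtain ⟨m, hm, hA'm⟩ : ∃ m : Ideal T, m.IsMaximal ∧ ¬ A' ≤ m := by
      by_contra hcon
      push Not at hcon
      apply hA'J
      rw [hJ, Ring.jacobson_eq_sInf_isMaximal]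
      exact le_sInf hcon
    have hsup : A' ⊔ m = ⊤ := by
      rw [sup_comm]
      exact hm.out.2 _ (left_lt_sup.mpr hA'm)
    obtain ⟨a, ha, μ, hμ, haμ⟩ := Submodule.mem_sup.mp ((Ideal.eq_top_iff_one _).mp hsup)
    have hx : ∀ x : T, x * μ = x - x * a := fun x => by
      rw [eq_sub_iff_add_eq, ← mul_add, add_comm, haμ, mul_one]
    set A'' : Ideal T := Submodule.map (LinearMap.toSpanSingleton T T μ) A with hA''
    have hle : A'' ≤ A := by
      rintro _ ⟨x, hxA, rfl⟩
      rw [LinearMap.toSpanSingleton_apply, smul_eq_mul, hx]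
      exact A.sub_mem hxA (hA'A (A'.mul_mem_left _ ha))
    have hlem : A'' ≤ m := by
      rintro _ ⟨x, hxA, rfl⟩
      exact m.mul_mem_left _ hμ
    have hAs : A ≤ A' ⊔ A'' := by
      intro x hxA
      refine Submodule.mem_sup.mpr ⟨x * a, A'.mul_mem_left _ ha, x * μ, ⟨x, hxA, rfl⟩, ?_⟩
      rw [← mul_add, haμ, mul_one]
    have : A'' = A := by
      refine hAmin A'' hle (Submodule.FG.map _ hAfg) ?_
      rw [eq_top_iff, ← hAC]
      refine sup_le (hAs.trans (sup_le (hA'C.trans le_sup_right) le_sup_left)) le_sup_right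
    exact hA'm (hA'A.trans (this ▸ hlem))
  have hCtop : C = ⊤ := by
    rwa [sup_eq_right.mpr (hAJ.trans hJC)] at hAC
  have hss : IsSemisimpleModule T (T ⧸ J) := by
    refine IsSemisimpleModule.of_sSup_simples_eq_top ?_
    rw [eq_top_iff]
    intro x _
    obtain ⟨y, rfl⟩ := J.mkQ_surjective x
    have : y ∈ C := hCtop ▸ Submodule.mem_top
    exact this
  let f : T ⧸ J →ₛₗ[Ideal.Quotient.mk J] T ⧸ J := ⟨AddHom.id _, fun _ _ ↦ rfl⟩
  have : RingHomSurjective (Ideal.Quotient.mk J) := ⟨Ideal.Quotient.mk_surjective⟩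
  exact (LinearMap.isSemisimpleModule_iff_of_bijective f Function.bijective_id).mp hss

theorem qf_dcc_nilpotent (h : QFDcc T) (n : ℕ)
    (hn : ∀ b : T, (∀ y ∈ Ring.jacobson T ^ (n + 1), y * b = 0) →
      ∀ y ∈ Ring.jacobson T ^ n, y * b = 0) : IsNilpotent (Ring.jacobson T) := by
  refine ⟨n, ?_⟩
  by_contra hne
  obtain ⟨z, hz, hz0⟩ := Submodule.exists_mem_ne_zero_of_ne_bot hne
  obtain ⟨A, -, ⟨y, hy, a, ha, hya⟩, hmin⟩ := h
    (fun A => ∃ y ∈ Ring.jacobson T ^ n, ∃ a ∈ A, y * a ≠ 0)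
    ⟨⊤, ⟨{1}, by simp⟩, z, hz, 1, trivial, by simpa using hz0⟩
  have h1 : ∃ y ∈ Ring.jacobson T ^ n, ∃ j ∈ Ring.jacobson T, y * (j * a) ≠ 0 := by
    by_contra hcon
    push Not at hcon
    refine hya (hn a (fun w hw => ?_) y hy)
    rw [Submodule.pow_succ] at hw
    refine Submodule.smul_induction_on hw (fun r hr j hj => ?_) (fun p q hp hq => ?_)
    · rw [smul_eq_mul, mul_assoc]; exact hcon r hr j hj
    · rw [add_mul, hp, hq, add_zero]
  obtain ⟨y', hy', j, hj, hyj⟩ := h1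
  have h2 := hmin (Ideal.span {j * a})
    ((Ideal.span_singleton_le_iff_mem _).mpr (A.mul_mem_left _ ha)) (qf_span_fg _)
    ⟨y', hy', j * a, Ideal.mem_span_singleton_self _, hyj⟩
  rw [← h2] at ha
  obtain ⟨t, ht⟩ := Submodule.mem_span_singleton.mp ha
  have hj' := hj
  rw [← Ideal.jacobson_bot, Ideal.mem_jacobson_iff] at hj'
  obtain ⟨z, hz⟩ := hj' (-t)
  rw [Submodule.mem_bot, sub_eq_zero] at hz
  apply hya
  have : a = 0 := by
    calc a = (z * -t * j + z) * a := by rw [hz, one_mul]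
      _ = z * (a - t • (j * a)) := by rw [smul_eq_mul]; noncomm_ring
      _ = 0 := by rw [ht, sub_self, mul_zero]
  rw [this, mul_zero]

theorem qf_semiprimary_of_surj {A B : Type*} [Ring A] [Ring B] (f : A →+* B)
    (hf : Function.Surjective f) [IsSemisimpleRing B] (hk : IsNilpotent (RingHom.ker f)) :
    IsSemiprimaryRing A := by
  have hle : RingHom.ker f ≤ Ring.jacobson A := by
    obtain ⟨n, hn⟩ := hk
    intro x hx
    rw [← Ideal.jacobson_bot, Ideal.mem_jacobson_iff]
    intro y
    have hyx : y * x ∈ RingHom.ker f := Ideal.mul_mem_left _ y hx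
    have hnil : IsNilpotent (y * x) := ⟨n, by
      have := Ideal.pow_mem_pow hyx n
      rwa [hn] at this⟩
    obtain ⟨v, hv⟩ := hnil.isUnit_one_add
    refine ⟨↑v⁻¹, ?_⟩
    rw [Submodule.mem_bot, sub_eq_zero]
    have := v.inv_mul
    rw [hv, mul_add, mul_one] at this
    rw [mul_assoc, add_comm, this]
  have : RingHomSurjective f := ⟨hf⟩
  have heq : Ring.jacobson A = RingHom.ker f := by
    refine le_antisymm ?_ hle
    intro x hx
    have := Ring.le_comap_jacobson f hx
    rw [IsSemisimpleRing.jacobson_eq_bot, Ideal.mem_comap, Submodule.mem_bot] at this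
    exact this
  refine ⟨?_, heq ▸ hk⟩
  exact ((RingHom.quotientKerEquivOfSurjective hf).symm.trans
    (Ideal.quotEquivOfEq heq.symm)).isSemisimpleRing

theorem qf_semiprimary_op {R : Type u} [Ring R] (h : IsSemiprimaryRing Rᵐᵒᵖ) :
    IsSemiprimaryRing R := by
  have hss := h.isSemisimpleRing
  let f : R →+* (Rᵐᵒᵖ ⧸ Ring.jacobson Rᵐᵒᵖ)ᵐᵒᵖ :=
    (RingHom.op (Ideal.Quotient.mk (Ring.jacobson Rᵐᵒᵖ))).comp (RingEquiv.opOp R).toRingHom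
  have hfx : ∀ x, f x = op (Ideal.Quotient.mk (Ring.jacobson Rᵐᵒᵖ) (op x)) := fun x => rfl
  have hf : Function.Surjective f := by
    intro y
    obtain ⟨z, hz⟩ := Ideal.Quotient.mk_surjective (unop y)
    exact ⟨unop z, by rw [hfx, op_unop, hz, op_unop]⟩
  refine qf_semiprimary_of_surj f hf ?_
  obtain ⟨n, hn⟩ := h.isNilpotent
  refine ⟨n, ?_⟩
  have key : ∀ n, ∀ x ∈ RingHom.ker f ^ n, op x ∈ Ring.jacobson Rᵐᵒᵖ ^ n := by
    intro n
    induction n with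
    | zero => intro x _; rw [Submodule.pow_zero, Ideal.one_eq_top]; trivial
    | succ n ih =>
      intro x hx
      rw [Submodule.pow_succ] at hx
      refine Submodule.smul_induction_on hx (fun r hr j hj => ?_) (fun p q hp hq => ?_)
      · rw [smul_eq_mul, op_mul, Ideal.IsTwoSided.pow_succ]
        have hj' : f j = 0 := hj
        rw [hfx, op_eq_zero_iff, Ideal.Quotient.eq_zero_iff_mem] at hj'
        exact Ideal.mul_mem_mul hj' (ih r hr)
      · rw [op_add]; exact Ideal.add_mem _ hp hq
  rw [Submodule.zero_eq_bot, eq_bot_iff]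
  intro x hx
  have := key n x hx
  rw [hn] at this
  rw [Submodule.mem_bot]
  exact (op_eq_zero_iff x).mp this

/-- nonzero modules over semiprimary rings have simple submodules -/
theorem qf_semiprimary_simple (h : IsSemiprimaryRing T) {M : Type v} [AddCommGroup M] [Module T M]
    (N : Submodule T M) (hN : N ≠ ⊥) : ∃ U ≤ N, IsSimpleModule T U := by
  obtain ⟨n, hn⟩ := h.isNilpotent
  have hss := h.isSemisimpleRing
  have key : ∀ k, (∃ x ∈ N, x ≠ 0 ∧ ∀ j ∈ Ring.jacobson T ^ k, j • x = 0) →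
      ∃ x ∈ N, x ≠ 0 ∧ ∀ j ∈ Ring.jacobson T, j • x = 0 := by
    intro k
    induction k with
    | zero =>
      rintro ⟨x, -, hx0, hx⟩
      exact absurd (by simpa using hx 1 (by rw [Submodule.pow_zero, Ideal.one_eq_top]; trivial)) hx0
    | succ k ih =>
      rintro ⟨x, hxN, hx0, hx⟩
      by_cases hc : ∀ j ∈ Ring.jacobson T, j • x = 0
      · exact ⟨x, hxN, hx0, hc⟩
      · push Not at hc
        obtain ⟨j, hj, hjx⟩ := hc
        refine ih ⟨j • x, N.smul_mem j hxN, hjx, fun i hi => ?_⟩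
        rw [← mul_smul]
        exact hx _ (by rw [Submodule.pow_succ]; exact Ideal.mul_mem_mul hi hj)
  obtain ⟨z, hz, hz0⟩ := N.exists_mem_ne_zero_of_ne_bot hN
  obtain ⟨x, hxN, hx0, hx⟩ := key n ⟨z, hz, hz0, fun j hj => by
    rw [hn] at hj
    have : j = 0 := hj
    rw [this, zero_smul]⟩
  set J := Ring.jacobson T with hJ
  have hss' : IsSemisimpleModule T (T ⧸ J) := by
    let f : T ⧸ J →ₛₗ[Ideal.Quotient.mk J] T ⧸ J := ⟨AddHom.id _, fun _ _ ↦ rfl⟩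
    have : RingHomSurjective (Ideal.Quotient.mk J) := ⟨Ideal.Quotient.mk_surjective⟩
    exact (LinearMap.isSemisimpleModule_iff_of_bijective f Function.bijective_id).mpr hss
  let g : (T ⧸ J) →ₗ[T] M := J.liftQ (LinearMap.toSpanSingleton T M x) (fun j hj => hx j hj)
  have : IsSemisimpleModule T (LinearMap.range g) := IsSemisimpleModule.range g
  have hne : LinearMap.range g ≠ ⊥ := by
    intro hb
    have : g (Submodule.Quotient.mk 1) ∈ LinearMap.range g := ⟨_, rfl⟩
    rw [hb, Submodule.mem_bot] at this
    have h1 : (1 : T) • x = 0 := this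
    exact hx0 (by rwa [one_smul] at h1)
  have hle : LinearMap.range g ≤ N := by
    rintro _ ⟨y, rfl⟩
    obtain ⟨r, rfl⟩ := Submodule.Quotient.mk_surjective _ y
    exact N.smul_mem r hxN
  obtain ⟨U, hU, hUs⟩ := (IsSemisimpleModule.eq_bot_or_exists_simple_le (R := T)
    (LinearMap.range g)).resolve_left hne
  exact ⟨U, hU.trans hle, hUs⟩

end QFSemiprimary

section QFCore
variable {R : Type u} [Ring R]

/-- left annihilator -/
def qfLann (X : Set R) : Ideal R where
  carrier := {a | ∀ x ∈ X, a * x = 0}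
  zero_mem' := fun x _ => zero_mul x
  add_mem' := fun {a b} ha hb x hx => by rw [add_mul, ha x hx, hb x hx, add_zero]
  smul_mem' := fun c a ha x hx => by rw [smul_eq_mul, mul_assoc, ha x hx, mul_zero]

theorem qf_mem_lann {X : Set R} {a : R} : a ∈ qfLann X ↔ ∀ x ∈ X, a * x = 0 := Iff.rfl

theorem qf_lann_anti {X Y : Set R} (h : X ⊆ Y) : qfLann Y ≤ qfLann X :=
  fun _ ha x hx => ha x (h hx)

/-- ACC on left annihilators -/
def QFAcc (R : Type u) [Ring R] : Prop :=
  WellFounded (fun X Y : Set R => qfLann Y < qfLann X)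

theorem QFAcc.exists_max (h : QFAcc R) (P : Set R → Prop) (hP : ∃ X, P X) :
    ∃ X, P X ∧ ∀ Y, P Y → qfLann X ≤ qfLann Y → qfLann Y ≤ qfLann X := by
  obtain ⟨X, hX, hmin⟩ := h.has_min {X | P X} hP
  refine ⟨X, hX, fun Y hY hle => ?_⟩
  by_contra hn
  exact hmin Y hY (lt_of_le_not_ge hle hn)

/-- underlying set of a right ideal -/
def qfSet (A : Ideal Rᵐᵒᵖ) : Set R := {x | op x ∈ A}

theorem qf_rl (hR : Module.Injective R R) (A : Ideal Rᵐᵒᵖ) (hA : A.FG) :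
    ∀ x : R, (∀ a ∈ qfLann (qfSet A), a * x = 0) → op x ∈ A := by
  refine Submodule.fg_induction (motive := fun A _ => ∀ x : R,
    (∀ a ∈ qfLann (qfSet A), a * x = 0) → op x ∈ A) ?_ ?_ A hA
  · intro y x hx
    obtain ⟨k, hk⟩ := qf_factor hR (LinearMap.toSpanSingleton R R (unop y))
      (LinearMap.toSpanSingleton R R x) (by
        intro r hr
        refine hx r fun z hz => ?_
        obtain ⟨c, hc⟩ := Submodule.mem_span_singleton.mp hz
        have h2 : z = unop y * unop c := by
          rw [← unop_op z, ← hc, smul_eq_mul, unop_mul]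
        have h3 : r * unop y = 0 := hr
        rw [h2, ← mul_assoc, h3, zero_mul])
    have h1 := hk 1
    simp only [LinearMap.toSpanSingleton_apply, one_smul] at h1
    refine Submodule.mem_span_singleton.mpr ⟨op (k 1), ?_⟩
    rw [← h1, smul_eq_mul, ← op_unop y, ← op_mul, unop_op]
    congr 1
    have := k.map_smul (unop y) 1
    rw [smul_eq_mul, mul_one] at this
    rw [this, smul_eq_mul]
  · intro A B hA hB ihA ihB x hx
    set L1 := qfLann (qfSet A)
    set L2 := qfLann (qfSet B)
    obtain ⟨k, hk⟩ := qf_factor hR (L1.mkQ.prod L2.mkQ) (LinearMap.toSpanSingleton R R x) (by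
      intro r hr
      have hr' : (L1.mkQ r, L2.mkQ r) = 0 := hr
      rw [Prod.mk_eq_zero] at hr'
      have h1 : r ∈ L1 := (Submodule.Quotient.mk_eq_zero L1).mp hr'.1
      have h2 : r ∈ L2 := (Submodule.Quotient.mk_eq_zero L2).mp hr'.2
      refine hx r fun z hz => ?_
      obtain ⟨a, ha, b, hb, hab⟩ := Submodule.mem_sup.mp hz
      have : z = unop a + unop b := by rw [← unop_add, hab, unop_op]
      rw [this, mul_add, h1 (unop a) ha, h2 (unop b) hb, add_zero])
    have hc1 : op (k (L1.mkQ 1, 0)) ∈ A := by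
      refine ihA _ fun a ha => ?_
      rw [← smul_eq_mul, ← map_smul, Prod.smul_mk, smul_zero, ← map_smul, smul_eq_mul, mul_one,
        Submodule.mkQ_apply, (Submodule.Quotient.mk_eq_zero L1).mpr ha]
      exact map_zero k
    have hc2 : op (k (0, L2.mkQ 1)) ∈ B := by
      refine ihB _ fun a ha => ?_
      rw [← smul_eq_mul, ← map_smul, Prod.smul_mk, smul_zero, ← map_smul, smul_eq_mul, mul_one,
        Submodule.mkQ_apply, (Submodule.Quotient.mk_eq_zero L2).mpr ha]
      exact map_zero k
    have h1 : k (L1.mkQ 1, L2.mkQ 1) = x := by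
      have := hk 1
      simpa using this
    refine Submodule.mem_sup.mpr ⟨_, hc1, _, hc2, ?_⟩
    rw [← op_add, ← map_add, Prod.mk_add_mk, add_zero, zero_add, h1]

theorem qf_rl_le (hR : Module.Injective R R) {A B : Ideal Rᵐᵒᵖ} (hB : B.FG)
    (h : qfLann (qfSet B) ≤ qfLann (qfSet A)) : A ≤ B := by
  intro y hy
  have := qf_rl hR B hB (unop y) fun a ha => h ha (unop y) ((op_unop y).symm ▸ hy)
  rwa [op_unop] at this

theorem qf_dcc (hR : Module.Injective R R) (hacc : QFAcc R) : QFDcc Rᵐᵒᵖ := by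
  intro P ⟨A, hA, hPA⟩
  obtain ⟨X, ⟨B, hB, hPB, rfl⟩, hmax⟩ := hacc.exists_max
    (fun X => ∃ B : Ideal Rᵐᵒᵖ, B.FG ∧ P B ∧ X = qfSet B) ⟨_, A, hA, hPA, rfl⟩
  refine ⟨B, hB, hPB, fun C hC hCfg hPC => le_antisymm hC ?_⟩
  exact qf_rl_le hR hCfg (hmax _ ⟨C, hCfg, hPC, rfl⟩ (qf_lann_anti fun x hx => hC hx))

theorem qf_jac_pow_le {T : Type u} [Ring T] (n : ℕ) :
    Ring.jacobson T ^ (n + 1) ≤ Ring.jacobson T ^ n := by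
  have h : Ring.jacobson T ^ (n + 1) = Ring.jacobson T * Ring.jacobson T ^ n :=
    Ideal.IsTwoSided.pow_succ n
  rw [h]
  exact Ideal.mul_le.mpr fun r _ s hs => Ideal.mul_mem_left _ r hs

theorem qf_core_semiprimary_op (hR : Module.Injective R R) (hacc : QFAcc R) :
    IsSemiprimaryRing Rᵐᵒᵖ := by
  have hd := qf_dcc hR hacc
  refine ⟨qf_dcc_semisimple hd, ?_⟩
  obtain ⟨X, ⟨n, rfl⟩, hmax⟩ := hacc.exists_max
    (fun X => ∃ n : ℕ, X = qfSet (Ring.jacobson Rᵐᵒᵖ ^ n)) ⟨_, 0, rfl⟩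
  refine qf_dcc_nilpotent hd n fun b hb y hy => ?_
  have h1 := hmax _ ⟨n + 1, rfl⟩ (qf_lann_anti fun x hx => qf_jac_pow_le n hx)
  have h2 : unop b ∈ qfLann (qfSet (Ring.jacobson Rᵐᵒᵖ ^ (n + 1))) := fun x hx => by
    have := congrArg unop (hb (op x) hx)
    rwa [unop_mul, unop_op, unop_zero] at this
  have h3 := h1 h2 (unop y) ((op_unop y).symm ▸ hy)
  apply unop_injective
  rw [unop_mul, h3, unop_zero]

/-- Kasch property -/
def QFKasch (R : Type u) [Ring R] : Prop :=
  ∀ (U : Type u) [AddCommGroup U] [Module R U] [IsSimpleModule R U],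
      ∃ f : U →ₗ[R] R, Function.Injective f

theorem qf_core_kasch (hR : Module.Injective R R) (hacc : QFAcc R) (hsp : IsSemiprimaryRing R) :
    QFKasch R := by
  have hpR : Module.Projective R R := inferInstance
  have hss : IsSemisimpleModule R (R ⧸ Ring.jacobson R) := by
    have hss := hsp.isSemisimpleRing
    let f : R ⧸ Ring.jacobson R →ₛₗ[Ideal.Quotient.mk (Ring.jacobson R)] R ⧸ Ring.jacobson R :=
      ⟨AddHom.id _, fun _ _ ↦ rfl⟩
    have : RingHomSurjective (Ideal.Quotient.mk (Ring.jacobson R)) :=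
      ⟨Ideal.Quotient.mk_surjective⟩
    exact (LinearMap.isSemisimpleModule_iff_of_bijective f Function.bijective_id).mpr hss
  have hfin : Finite (QFTypes R) := by
    have hN : IsNoetherian R (R ⧸ Ring.jacobson R) :=
      (IsSemisimpleModule.finite_tfae.out 0 1).mp (inferInstance : Module.Finite R (R ⧸ Ring.jacobson R))
    refine qf_types_finite (N := R ⧸ Ring.jacobson R) fun U _ _ _ => ?_
    obtain ⟨m, ⟨e⟩⟩ := qf_type_of (R := R) U
    have := m.2
    let q : (R ⧸ Ring.jacobson R) →ₗ[R] (R ⧸ m.1) :=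
      Submodule.factor (Ring.jacobson_le_of_isMaximal m.1)
    have hq : Function.Surjective q := Submodule.factor_surjective _
    obtain ⟨s, hs⟩ := IsSemisimpleModule.lifting_property q hq LinearMap.id
    have hsi : Function.Injective s :=
      Function.LeftInverse.injective (g := q) fun x => LinearMap.congr_fun hs x
    exact ⟨s ∘ₗ e.toLinearMap, hsi.comp e.injective⟩
  have hlink : ∀ (U : Type u) [AddCommGroup U] [Module R U] [IsSimpleModule R U],
      ∃ (T : Type u) (_ : AddCommGroup T) (_ : Module R T), IsSimpleModule R T ∧
        QFLink R T U := by
    intro U _ _ _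
    have := IsSimpleModule.nontrivial R U
    obtain ⟨z, hz⟩ := exists_ne (0 : U)
    let q : R →ₗ[R] U := LinearMap.toSpanSingleton R U z
    have hq1 : q 1 ≠ 0 := by simpa [q] using hz
    -- a complemented left ideal not killed by `q`, with maximal complement
    obtain ⟨X, ⟨P, hXP, hPq⟩, hmax⟩ := hacc.exists_max
      (fun X => ∃ P : Ideal R, IsCompl P (qfLann X) ∧ ¬ P ≤ LinearMap.ker q)
      ⟨{1}, ⊤, by
        have : qfLann ({1} : Set R) = ⊥ := by
          rw [eq_bot_iff]
          intro a ha
          simpa using ha 1 rfl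
        rw [this]; exact isCompl_top_bot, fun hh => hq1 (hh trivial)⟩
    have hPne : P ≠ ⊥ := fun hh => hPq (hh ▸ bot_le)
    obtain ⟨T, hTP, hT⟩ := qf_semiprimary_simple hsp P hPne
    obtain ⟨pr, hpr, hpr0⟩ := qf_compl_retract hXP
    have hPinj : Module.Injective R P := qf_inj_retract hR P.subtype pr hpr
    have hPproj : Module.Projective R P := qf_proj_retract hpR P.subtype pr hpr
    let T' : Submodule R P := T.comap P.subtype
    have eT : T' ≃ₗ[R] T := Submodule.comapSubtypeEquivOfLe hTP
    have hT' : IsSimpleModule R T' := IsSimpleModule.congr eT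
    obtain ⟨E, K, hTE, -, hEK, hE⟩ := qf_hull_bil hPinj hPproj T'
    let qE : E →ₗ[R] U := q ∘ₗ P.subtype ∘ₗ E.subtype
    have hqE : qE ≠ 0 := by
      intro h0
      obtain ⟨prK, hprK, hprK0⟩ := qf_compl_retract hEK.symm
      -- the projection of R onto K
      let π : R →ₗ[R] R := P.subtype ∘ₗ K.subtype ∘ₗ prK ∘ₗ pr
      have hπ : ∀ a, π a = a * π 1 := fun a => by
        have := π.map_smul a 1
        rwa [smul_eq_mul, mul_one, smul_eq_mul] at this
      have hker : ∀ a, a ∈ qfLann ({π 1} : Set R) ↔ π a = 0 := fun a => by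
        rw [qf_mem_lann, hπ a]; simp
      have hπ0 : ∀ a, π a = 0 ↔ pr a ∈ E := by
        intro a
        constructor
        · intro h
          have h1 : prK (pr a) = 0 := Subtype.ext (Subtype.ext h)
          have hm : pr a ∈ E ⊔ K := hEK.sup_eq_top ▸ Submodule.mem_top
          obtain ⟨e, he, k, hk, hek⟩ := Submodule.mem_sup.mp hm
          rw [← hek, map_add, hprK0 e he, zero_add] at h1
          have h2 := hprK ⟨k, hk⟩
          have h3 : k = 0 := by
            have := h2.symm.trans h1
            exact congrArg Subtype.val this
          rw [← hek, h3, add_zero]; exact he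
        · intro h
          change ((prK (pr a) : P) : R) = 0
          rw [hprK0 _ h]; rfl
      have hcompl : IsCompl (K.map P.subtype) (qfLann ({π 1} : Set R)) := by
        constructor
        · rw [Submodule.disjoint_def]
          rintro _ ⟨k, hk, rfl⟩ hk2
          rw [hker, hπ0] at hk2
          have h4 : pr (P.subtype k) = k := hpr k
          rw [h4] at hk2
          have := Submodule.disjoint_def.mp hEK.disjoint k hk2 hk
          rw [this]; rfl
        · rw [codisjoint_iff, eq_top_iff]
          intro a _
          refine Submodule.mem_sup.mpr ⟨π a, ⟨_, (prK (pr a)).2, rfl⟩, a - π a, ?_, by abel⟩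
          rw [hker, map_sub, sub_eq_zero]
          have h4 : pr (π a) = (prK (pr a) : P) := hpr _
          change π a = ((prK (pr (π a)) : P) : R)
          rw [h4, hprK]
          rfl
      have hnk : ¬ K.map P.subtype ≤ LinearMap.ker q := by
        intro hle
        apply hPq
        intro x hx
        have hm : (⟨x, hx⟩ : P) ∈ E ⊔ K := hEK.sup_eq_top ▸ Submodule.mem_top
        obtain ⟨e, he, k, hk, hek⟩ := Submodule.mem_sup.mp hm
        have h5 : q (e : R) = 0 := LinearMap.congr_fun h0 ⟨e, he⟩
        have h6 : q (k : R) = 0 := hle ⟨k, hk, rfl⟩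
        have h7 : x = (e : R) + (k : R) := (congrArg Subtype.val hek).symm
        rw [LinearMap.mem_ker, h7, map_add, h5, h6, add_zero]
      have hle : qfLann X ≤ qfLann ({π 1} : Set R) := by
        intro a ha
        rw [hker, hπ0, hpr0 a ha]
        exact E.zero_mem
      have hge := hmax _ ⟨_, hcompl, hnk⟩ hle
      obtain ⟨t, ht, ht0⟩ := Submodule.exists_mem_ne_zero_of_ne_bot
        (isSimpleModule_iff_isAtom.mp hT).1
      have htX : t ∈ qfLann X := by
        apply hge
        rw [hker, hπ0]
        have h8 : pr t = ⟨t, hTP ht⟩ := hpr ⟨t, hTP ht⟩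
        rw [h8]
        exact hTE ht
      exact ht0 (Submodule.disjoint_def.mp hXP.disjoint t (hTP ht) htX)
    exact ⟨T', inferInstance, inferInstance, hT', E, inferInstance, inferInstance, hE,
      ⟨Submodule.inclusion hTE, Submodule.inclusion_injective hTE⟩, qE,
      LinearMap.surjective_of_ne_zero hqE⟩
  intro T _ _ _
  obtain ⟨U, _, _, hU, E, _, _, hE, ⟨i, hi⟩, -⟩ := qf_pigeon_soc hlink T
  obtain ⟨c, p, hcp⟩ := qf_bil_in_ring hE i hi
  exact ⟨c ∘ₗ i, (Function.LeftInverse.injective hcp).comp hi⟩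

end QFCore

section QFCore2
variable {R : Type u} [Ring R]

theorem qf_lr (hR : Module.Injective R R) (hK : QFKasch R) (L : Ideal R) (x : R) (hx : x ∉ L) :
    ∃ c : R, (∀ l ∈ L, l * c = 0) ∧ x * c ≠ 0 := by
  let W : Submodule R (R ⧸ L) := Submodule.span R {L.mkQ x}
  let w : W := ⟨L.mkQ x, Submodule.mem_span_singleton_self _⟩
  have hw0 : w ≠ 0 := fun h => hx ((Submodule.Quotient.mk_eq_zero L).mp (congrArg Subtype.val h))
  have : Nontrivial W := ⟨w, 0, hw0⟩
  have : Module.Finite R W := Module.Finite.iff_fg.mpr ⟨{L.mkQ x}, by simp [W]⟩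
  obtain ⟨m, hm, -⟩ := (IsCoatomic.eq_top_or_exists_le_coatom (⊥ : Submodule R W)).resolve_left
    bot_ne_top
  have : IsSimpleModule R (W ⧸ m) := isSimpleModule_iff_isCoatom.mpr hm
  obtain ⟨j, hj⟩ := hK (W ⧸ m)
  obtain ⟨k, hk⟩ := qf_ext hR W.subtype W.injective_subtype (j ∘ₗ m.mkQ)
  have hmul : ∀ a, a * k (L.mkQ 1) = k (L.mkQ a) := fun a => by
    rw [← smul_eq_mul, ← map_smul, ← map_smul, smul_eq_mul, mul_one]
  refine ⟨k (L.mkQ 1), fun l hl => ?_, fun h => ?_⟩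
  · rw [hmul, Submodule.mkQ_apply, (Submodule.Quotient.mk_eq_zero L).mpr hl, map_zero]
  · rw [hmul] at h
    have h1 : j (m.mkQ w) = 0 := (hk w).symm.trans h
    rw [map_eq_zero_iff j hj] at h1
    have h2 : w ∈ m := (Submodule.Quotient.mk_eq_zero m).mp h1
    apply hm.1
    rw [eq_top_iff]
    rintro ⟨y, hy⟩ -
    obtain ⟨r, hr⟩ := Submodule.mem_span_singleton.mp hy
    have : (⟨y, hy⟩ : W) = r • w := Subtype.ext hr.symm
    rw [this]
    exact m.smul_mem r h2

theorem qf_core_leftnoeth (hR : Module.Injective R R) (hacc : QFAcc R) (hK : QFKasch R) :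
    IsNoetherianRing R := by
  classical
  rw [isNoetherianRing_iff_ideal_fg]
  intro L
  obtain ⟨X, ⟨F, hFL, rfl⟩, hmax⟩ := hacc.exists_max
    (fun X => ∃ F : Finset R, (F : Set R) ⊆ L ∧ X = {c | ∀ f ∈ F, f * c = 0}) ⟨_, ∅, by simp, rfl⟩
  refine ⟨F, le_antisymm (Ideal.span_le.mpr hFL) fun y hy => ?_⟩
  have h1 := hmax _ ⟨insert y F, by
      intro z hz
      rcases Finset.mem_insert.mp (Finset.mem_coe.mp hz) with rfl | hz
      · exact hy
      · exact hFL hz, rfl⟩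
    (qf_lann_anti fun c hc f hf => hc f (Finset.mem_insert_of_mem hf))
  have h2 := @h1 y fun c hc => hc y (Finset.mem_insert_self y F)
  by_contra hn
  obtain ⟨c, hc, hyc⟩ := qf_lr hR hK _ y hn
  exact hyc (h2 c fun f hf => hc f (Ideal.subset_span hf))

theorem qf_core_rightnoeth (hR : Module.Injective R R) (hart : IsArtinianRing R) :
    IsNoetherianRing Rᵐᵒᵖ := by
  rw [isNoetherianRing_iff_ideal_fg]
  intro A
  have wf : WellFounded (fun I J : Ideal R => I < J) := wellFounded_lt
  obtain ⟨I, ⟨B, hB, hBA, rfl⟩, hmin⟩ := wf.has_min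
    {I | ∃ B : Ideal Rᵐᵒᵖ, B.FG ∧ B ≤ A ∧ I = qfLann (qfSet B)} ⟨_, ⊥, ⟨∅, by simp⟩, bot_le, rfl⟩
  have : B = A := by
    refine le_antisymm hBA fun y hy => ?_
    have hfg : (B ⊔ Ideal.span {y}).FG := Submodule.FG.sup hB (qf_span_fg y)
    have h1 := hmin _ ⟨_, hfg, sup_le hBA ((Ideal.span_singleton_le_iff_mem _).mpr hy), rfl⟩
    have h2 : qfLann (qfSet (B ⊔ Ideal.span {y})) ≤ qfLann (qfSet B) :=
      qf_lann_anti fun x hx => (le_sup_left : B ≤ B ⊔ Ideal.span {y}) hx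
    have h3 : qfLann (qfSet B) ≤ qfLann (qfSet (B ⊔ Ideal.span {y})) := by
      by_contra hn
      exact h1 (lt_of_le_not_ge h2 hn)
    exact qf_rl_le hR hB h3 ((le_sup_right : Ideal.span {y} ≤ B ⊔ Ideal.span {y})
      (Ideal.mem_span_singleton_self y))
  rwa [← this]

theorem qf_core_right_ext (hR : Module.Injective R R) (hK : QFKasch R) (A : Ideal Rᵐᵒᵖ)
    (hA : A.FG) : ∀ g : A →ₗ[Rᵐᵒᵖ] Rᵐᵒᵖ, ∃ c : R, ∀ (y : Rᵐᵒᵖ) (hy : y ∈ A),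
      unop (g ⟨y, hy⟩) = c * unop y := by
  refine Submodule.fg_induction (motive := fun A _ => ∀ g : A →ₗ[Rᵐᵒᵖ] Rᵐᵒᵖ, ∃ c : R,
    ∀ (y : Rᵐᵒᵖ) (hy : y ∈ A), unop (g ⟨y, hy⟩) = c * unop y) ?_ ?_ A hA
  · intro y0 g
    have hy0 : y0 ∈ Submodule.span Rᵐᵒᵖ {y0} := Submodule.mem_span_singleton_self y0
    have hb : unop (g ⟨y0, hy0⟩) ∈ Ideal.span {unop y0} := by
      by_contra hn
      obtain ⟨c, hc, hbc⟩ := qf_lr hR hK _ _ hn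
      apply hbc
      have h1 := hc (unop y0) (Ideal.mem_span_singleton_self _)
      have h2 : op c • (⟨y0, hy0⟩ : Submodule.span Rᵐᵒᵖ {y0}) = 0 := by
        apply Subtype.ext
        change op c * y0 = 0
        apply unop_injective
        rw [unop_mul, unop_op, h1, unop_zero]
      have h3 := congrArg unop (g.map_smul (op c) ⟨y0, hy0⟩)
      rw [h2, map_zero, smul_eq_mul, unop_mul, unop_op, unop_zero] at h3
      exact h3.symm
    obtain ⟨d, hd⟩ := Submodule.mem_span_singleton.mp hb
    refine ⟨d, fun y hy => ?_⟩
    obtain ⟨t, rfl⟩ := Submodule.mem_span_singleton.mp hy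
    have h4 : (⟨t • y0, hy⟩ : Submodule.span Rᵐᵒᵖ {y0}) = t • ⟨y0, hy0⟩ := rfl
    rw [h4, map_smul, smul_eq_mul, unop_mul, ← hd, smul_eq_mul, smul_eq_mul, unop_mul, mul_assoc]
  · intro A B hA hB ihA ihB g
    obtain ⟨c1, h1⟩ := ihA (g ∘ₗ Submodule.inclusion le_sup_left)
    obtain ⟨c2, h2⟩ := ihB (g ∘ₗ Submodule.inclusion le_sup_right)
    have hmem : c1 - c2 ∈ qfLann (qfSet A) ⊔ qfLann (qfSet B) := by
      by_contra hn
      obtain ⟨d, hd, hcd⟩ := qf_lr hR hK _ _ hn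
      have hdA : op d ∈ A := qf_rl hR A hA d fun a ha => hd a (Submodule.mem_sup_left ha)
      have hdB : op d ∈ B := qf_rl hR B hB d fun a ha => hd a (Submodule.mem_sup_right ha)
      apply hcd
      have e1 := h1 (op d) hdA
      have e2 := h2 (op d) hdB
      rw [sub_mul, sub_eq_zero]
      exact e1.symm.trans e2
    obtain ⟨p, hp, q, hq, hpq⟩ := Submodule.mem_sup.mp hmem
    have hc2 : c1 - p = c2 + q := by
      rw [sub_eq_iff_eq_add]
      have : c1 = (p + q) + c2 := by rw [hpq]; abel
      rw [this]; abel
    refine ⟨c1 - p, fun y hy => ?_⟩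
    obtain ⟨a, ha, b, hb, rfl⟩ := Submodule.mem_sup.mp hy
    have e : (⟨a + b, hy⟩ : (A ⊔ B : Ideal Rᵐᵒᵖ)) =
      Submodule.inclusion le_sup_left ⟨a, ha⟩ + Submodule.inclusion le_sup_right ⟨b, hb⟩ := rfl
    have e1 : unop (g (Submodule.inclusion le_sup_left ⟨a, ha⟩)) = c1 * unop a := h1 a ha
    have e2 : unop (g (Submodule.inclusion le_sup_right ⟨b, hb⟩)) = c2 * unop b := h2 b hb
    have e3 : p * unop a = 0 := hp (unop a) ((op_unop a).symm ▸ ha)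
    have e4 : q * unop b = 0 := hq (unop b) ((op_unop b).symm ▸ hb)
    have e5 : (c1 - p) * unop a = c1 * unop a := by rw [sub_mul, e3, sub_zero]
    have e6 : (c1 - p) * unop b = c2 * unop b := by rw [hc2, add_mul, e4, add_zero]
    rw [e, map_add, unop_add, unop_add, mul_add, e1, e2, e5, e6]

/-- the core theorem -/
theorem qf_core (hR : Module.Injective R R) (hacc : QFAcc R) :
    IsArtinianRing R ∧ IsArtinianRing Rᵐᵒᵖ ∧ Module.Injective Rᵐᵒᵖ Rᵐᵒᵖ ∧ QFKasch R := by
  have hsp' := qf_core_semiprimary_op hR hacc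
  have hsp := qf_semiprimary_op hsp'
  have hK := qf_core_kasch hR hacc hsp
  have hn := qf_core_leftnoeth hR hacc hK
  have ha : IsArtinianRing R := IsSemiprimaryRing.isNoetherian_iff_isArtinian.mp hn
  have hn' := qf_core_rightnoeth hR ha
  have ha' : IsArtinianRing Rᵐᵒᵖ := IsSemiprimaryRing.isNoetherian_iff_isArtinian.mp hn'
  refine ⟨ha, ha', ?_, hK⟩
  refine Module.Baer.injective fun I g => ?_
  obtain ⟨c, hc⟩ := qf_core_right_ext hR hK I (IsNoetherian.noetherian I) g
  refine ⟨LinearMap.toSpanSingleton Rᵐᵒᵖ Rᵐᵒᵖ (op c), fun x hx => ?_⟩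
  apply unop_injective
  rw [hc x hx, LinearMap.toSpanSingleton_apply, smul_eq_mul, unop_mul, unop_op]

theorem qf_acc_of_noeth [IsNoetherianRing R] : QFAcc R :=
  InvImage.wf qfLann (wellFounded_gt (α := Ideal R))

end QFCore2

section QFMin
variable {S : Type u} [Ring S]

theorem qf_dfinsupp_injective [IsNoetherianRing S] {ι : Type u} (E : ι → Type u)
    [∀ i, AddCommGroup (E i)] [∀ i, Module S (E i)] (h : ∀ i, Module.Injective S (E i)) :
    Module.Injective S (Π₀ i, E i) := by
  classical
  refine Module.Baer.injective fun I f => ?_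
  have hfin : Module.Finite S I := inferInstance
  obtain ⟨s, hs⟩ := hfin.fg_top
  let F := s.biUnion fun x => (f x).support
  have hF : ∀ i, i ∉ F → ∀ x, f x i = 0 := by
    intro i hi
    have : (DFinsupp.lapply i : (Π₀ i, E i) →ₗ[S] E i) ∘ₗ f = 0 := by
      refine LinearMap.ext_on hs fun x hx => ?_
      by_contra hne
      apply hi
      refine Finset.mem_biUnion.mpr ⟨x, hx, ?_⟩
      rw [DFinsupp.mem_support_iff]
      exact hne
    exact fun x => LinearMap.congr_fun this x
  have hg : ∀ i, ∃ m : E i, ∀ x (hx : x ∈ I), x • m = f ⟨x, hx⟩ i := by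
    intro i
    obtain ⟨g, hg⟩ := Module.Baer.of_injective (h i) I ((DFinsupp.lapply i : (Π₀ i, E i) →ₗ[S] E i) ∘ₗ f)
    refine ⟨g 1, fun x hx => ?_⟩
    rw [← map_smul, smul_eq_mul, mul_one]
    exact hg x hx
  choose m hm using hg
  refine ⟨LinearMap.toSpanSingleton S _ (DFinsupp.mk F fun i => m i), fun x hx => ?_⟩
  ext i
  rw [LinearMap.toSpanSingleton_apply, DFinsupp.smul_apply, DFinsupp.mk_apply]
  split_ifs with hi
  · exact hm i x hx
  · rw [smul_zero, hF i hi]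

theorem qf_simple_datum (hS : Module.Injective S S) (hK : QFKasch S)
    {M : Type u} [AddCommGroup M] [Module S M]
    (hM : ∀ I : Submodule S S, IsAtom I → ∀ f : ↥I →ₗ[S] M,
      ∃ g : S →ₗ[S] M, ∀ x : ↥I, g ↑x = f x)
    (T : Type u) [AddCommGroup T] [Module S T] [IsSimpleModule S T] (t : T →ₗ[S] M) :
    ∃ (E : Submodule S S) (j : T →ₗ[S] E) (g : E →ₗ[S] M), QFBil S E ∧ Function.Injective j ∧
      (∀ x : E, x ≠ 0 → ∃ r : S, r • x ∈ LinearMap.range j ∧ r • x ≠ 0) ∧ ∀ x, g (j x) = t x := by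
  obtain ⟨f, hf⟩ := hK T
  let e := LinearEquiv.ofInjective f hf
  have hs : IsSimpleModule S (LinearMap.range f) := IsSimpleModule.congr e.symm
  obtain ⟨E, K, hTE, hess, -, hbil⟩ := qf_hull_bil hS inferInstance (LinearMap.range f)
  obtain ⟨g, hg⟩ := hM _ (isSimpleModule_iff_isAtom.mp hs) (t ∘ₗ e.symm.toLinearMap)
  refine ⟨E, f.codRestrict E fun x => hTE ⟨x, rfl⟩, g ∘ₗ E.subtype, hbil, ?_, ?_, ?_⟩
  · intro x y hxy
    exact hf (congrArg Subtype.val hxy)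
  · intro x hx
    obtain ⟨r, ⟨z, hz⟩, h2⟩ := hess x x.2 fun h => hx (Subtype.ext h)
    exact ⟨r, ⟨z, Subtype.ext hz⟩, fun h => h2 (congrArg Subtype.val h)⟩
  · intro x
    have := hg (e x)
    rw [LinearMap.comp_apply, LinearEquiv.coe_coe, e.symm_apply_apply] at this
    exact this

theorem qf_mininj_proj [IsArtinianRing S] (hS : Module.Injective S S) (hK : QFKasch S)
    {M : Type u} [AddCommGroup M] [Module S M]
    (hM : ∀ I : Submodule S S, IsAtom I → ∀ f : ↥I →ₗ[S] M,
      ∃ g : S →ₗ[S] M, ∀ x : ↥I, g ↑x = f x) : Module.Projective S M := by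
  classical
  have hsp : IsSemiprimaryRing S := inferInstance
  have hN : IsNoetherianRing S := inferInstance
  let σ : Submodule S M := sSup {U : Submodule S M | IsSimpleModule S U}
  have hσ : IsSemisimpleModule S σ := by
    have := isSemisimpleModule_biSup_of_isSemisimpleModule_submodule (R := S)
      (s := {U : Submodule S M | IsSimpleModule S U}) (p := fun U => U) fun U hU => by
        have : IsSimpleModule S U := hU
        infer_instance
    rw [← sSup_eq_iSup] at this
    exact this
  obtain ⟨s, e, -, hs⟩ := IsSemisimpleModule.exists_linearEquiv_dfinsupp S σ
  let t : ∀ i : s, i.1 →ₗ[S] M := fun i => σ.subtype ∘ₗ e.symm.toLinearMap ∘ₗ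
    (DFinsupp.lsingle (M := fun i : s => i.1) (R := S) i)
  have H := fun i : s => have := hs i; qf_simple_datum hS hK hM i.1 (t i)
  choose E j g hbil hj hess hgj using H
  let Φ : (Π₀ i, E i) →ₗ[S] M := DFinsupp.lsum ℕ g
  have hΦ : Φ ∘ₗ DFinsupp.mapRange.linearMap j = σ.subtype ∘ₗ e.symm.toLinearMap := by
    refine DFinsupp.lhom_ext fun i x => ?_
    have : DFinsupp.mapRange.linearMap j (DFinsupp.single i x) = DFinsupp.single i (j i x) :=
      DFinsupp.mapRange_single (hf := fun i => map_zero (j i))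
    rw [LinearMap.comp_apply, this]
    change DFinsupp.lsum ℕ g _ = _
    rw [DFinsupp.lsum_single, hgj]
    rfl
  have hΦi : Function.Injective Φ := by
    rw [← LinearMap.ker_eq_bot]
    by_contra hne
    obtain ⟨U, hU, hUs⟩ := qf_semiprimary_simple hsp _ hne
    have hUa := isSimpleModule_iff_isAtom.mp hUs
    obtain ⟨y, hy, hy0⟩ := Submodule.exists_mem_ne_zero_of_ne_bot hUa.1
    have hyj : ∀ i, ∃ z, j i z = y i := by
      intro i
      by_cases h0 : y i = 0
      · exact ⟨0, by rw [map_zero, h0]⟩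
      · obtain ⟨r, ⟨z, hz⟩, hr⟩ := hess i (y i) h0
        have hsp : Submodule.span S {r • y} = U := by
          refine (hUa.le_iff.mp ?_).resolve_left ?_
          · rw [Submodule.span_singleton_le_iff_mem]; exact U.smul_mem r hy
          · intro h
            rw [Submodule.span_singleton_eq_bot] at h
            apply hr
            rw [← DFinsupp.smul_apply, h]; rfl
        rw [← hsp] at hy
        obtain ⟨a, ha⟩ := Submodule.mem_span_singleton.mp hy
        refine ⟨a • z, ?_⟩
        rw [map_smul, hz, ← DFinsupp.smul_apply, ← DFinsupp.smul_apply, ha]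
    choose z hz using hyj
    have hzy : DFinsupp.mapRange.linearMap j (DFinsupp.mk y.support fun i => z i) = y := by
      ext1 i
      change j i ((DFinsupp.mk y.support fun i => z i : Π₀ i : s, i.1) i) = y i
      rw [DFinsupp.mk_apply]
      split_ifs with hi
      · exact hz i
      · rw [map_zero]
        exact (DFinsupp.notMem_support_iff.mp hi).symm
    have h1 := LinearMap.congr_fun hΦ (DFinsupp.mk y.support fun i => z i)
    rw [LinearMap.comp_apply, hzy, LinearMap.mem_ker.mp (hU hy)] at h1
    have h2 : e.symm (DFinsupp.mk y.support fun i => z i) = 0 := Subtype.ext h1.symm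
    rw [LinearEquiv.map_eq_zero_iff] at h2
    rw [h2, map_zero] at hzy
    exact hy0 hzy.symm
  have hinj := qf_dfinsupp_injective (fun i => E i) fun i => (hbil i).inj
  have hpr := fun i => (hbil i).proj
  obtain ⟨ρ, hρ⟩ := qf_ext hinj Φ hΦi LinearMap.id
  have hρi : Function.Injective ρ := by
    rw [← LinearMap.ker_eq_bot]
    by_contra hne
    obtain ⟨U, hU, hUs⟩ := qf_semiprimary_simple hsp _ hne
    obtain ⟨y, hy, hy0⟩ := Submodule.exists_mem_ne_zero_of_ne_bot (isSimpleModule_iff_isAtom.mp hUs).1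
    have hyσ : y ∈ σ := (le_sSup hUs : U ≤ σ) hy
    have h1 := LinearMap.congr_fun hΦ (e ⟨y, hyσ⟩)
    have h2 : Φ (DFinsupp.mapRange.linearMap j (e ⟨y, hyσ⟩)) = y := by
      rw [← LinearMap.comp_apply, h1]; simp
    have h3 := hρ (DFinsupp.mapRange.linearMap j (e ⟨y, hyσ⟩))
    rw [h2, LinearMap.mem_ker.mp (hU hy)] at h3
    apply hy0
    rw [← h2, show DFinsupp.mapRange.linearMap j (e ⟨y, hyσ⟩) = 0 from h3.symm, map_zero]
  have hproj : Module.Projective S (Π₀ i, E i) := inferInstance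
  refine qf_proj_retract hproj ρ Φ fun x => hρi ?_
  rw [hρ]; rfl

end QFMin

section QFDualSec

/-- the character group of a left module, to be seen as a right module -/
def QFDual (M : Type u) [AddCommGroup M] : Type u := M →+ AddCircle (1 : ℚ)

noncomputable instance (M : Type u) [AddCommGroup M] : AddCommGroup (QFDual M) :=
  inferInstanceAs (AddCommGroup (M →+ AddCircle (1 : ℚ)))

/-- evaluation of a character -/
def QFDual.ev {M : Type u} [AddCommGroup M] (c : QFDual M) : M →+ AddCircle (1 : ℚ) := c

variable {R : Type u} [Ring R] {M : Type u} [AddCommGroup M] [Module R M]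

theorem QFDual.ev_add (c d : QFDual M) (m : M) : (c + d).ev m = c.ev m + d.ev m := rfl

theorem QFDual.ev_zero (m : M) : (0 : QFDual M).ev m = 0 := rfl

theorem QFDual.ext_ev {c d : QFDual M} (h : ∀ m, c.ev m = d.ev m) : c = d :=
  DFunLike.ext (F := M →+ AddCircle (1 : ℚ)) _ _ h

noncomputable instance : Module Rᵐᵒᵖ (QFDual M) where
  smul r c := AddMonoidHom.comp c.ev (DistribSMul.toAddMonoidHom M (unop r))
  one_smul c := QFDual.ext_ev fun m => congrArg c.ev (one_smul R m)
  mul_smul r s c := QFDual.ext_ev fun m => congrArg c.ev (mul_smul (unop s) (unop r) m)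
  smul_zero _ := rfl
  smul_add _ _ _ := rfl
  add_smul r s c := QFDual.ext_ev fun m =>
    (congrArg c.ev (add_smul (unop r) (unop s) m)).trans (map_add c.ev _ _)
  zero_smul c := QFDual.ext_ev fun m => (congrArg c.ev (zero_smul R m)).trans (map_zero c.ev)

theorem QFDual.ev_smul (r : Rᵐᵒᵖ) (c : QFDual M) (m : M) : (r • c).ev m = c.ev (unop r • m) := rfl

/-- evaluation at an element is additive -/
def qfEvalAt (m : M) : QFDual M →+ AddCircle (1 : ℚ) where
  toFun c := c.ev m
  map_zero' := rfl
  map_add' _ _ := rfl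

theorem qf_dual_mininj (hM : IsMinFlat R M) : IsMininjective R (QFDual M) := by
  intro I hI f
  let h : TensorProduct ℤ I M →+ AddCircle (1 : ℚ) := TensorProduct.liftAddHom
    { toFun := fun x => (f x).ev
      map_zero' := by rw [map_zero]; rfl
      map_add' := fun x y => by rw [map_add]; rfl }
    (fun n x m => by
      change (f (n • x)).ev m = (f x).ev (n • m)
      rw [map_zsmul, map_zsmul]
      rfl)
  have hker : minflatBalance R M I ≤ LinearMap.ker h.toIntLinearMap := by
    rw [minflatBalance, Submodule.span_le]
    rintro t ⟨x, r, m, rfl⟩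
    simp only [SetLike.mem_coe, LinearMap.mem_ker, AddMonoidHom.coe_toIntLinearMap, map_sub]
    rw [sub_eq_zero]
    change (f (op r • x)).ev m = (f x).ev (r • m)
    rw [map_smul]
    rfl
  obtain ⟨k, hk⟩ := (Module.Baer.of_divisible
    (AddCircle (1 : ℚ))).extension_property_addMonoidHom
    (Submodule.liftQ (minflatBalance R M I) (minflatAux R M I).toIntLinearMap
        (minflatBalance_le_ker R M I)).toAddMonoidHom (hM I hI)
    (Submodule.liftQ (minflatBalance R M I) h.toIntLinearMap hker).toAddMonoidHom
  let g : R →ₗ[Rᵐᵒᵖ] QFDual M :=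
    { toFun := fun r => (op r • (show QFDual M from k))
      map_add' := fun r s => by rw [op_add, add_smul]
      map_smul' := fun s r => by
        rw [← mul_smul]; rfl }
  refine ⟨g, fun x => QFDual.ext_ev fun m => ?_⟩
  have h1 := DFunLike.congr_fun hk (Submodule.Quotient.mk (x ⊗ₜ[ℤ] m))
  exact h1

theorem qf_flat_inj [IsNoetherianRing R] (hP : Module.Projective Rᵐᵒᵖ (QFDual M)) :
    Module.Injective R M := by
  classical
  refine Module.Baer.injective fun L f => ?_
  obtain ⟨n, b, hb⟩ := Module.Finite.exists_fin (R := R) (M := L)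
  suffices H : ∃ m : M, ∀ i, (b i : R) • m = f (b i) by
    obtain ⟨m, hm⟩ := H
    refine ⟨LinearMap.toSpanSingleton R M m, fun x hx => ?_⟩
    have : (LinearMap.toSpanSingleton R M m) ∘ₗ L.subtype = f := by
      refine LinearMap.ext_on_range hb fun i => ?_
      exact hm i
    exact LinearMap.congr_fun this ⟨x, hx⟩
  let θ : M →+ (Fin n → M) :=
    { toFun := fun m i => (b i : R) • m
      map_zero' := by ext i; simp
      map_add' := fun x y => by ext i; simp }
  by_contra hno
  have hv : (QuotientAddGroup.mk (fun i => f (b i)) : (Fin n → M) ⧸ θ.range) ≠ 0 := by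
    intro h
    rw [QuotientAddGroup.eq_zero_iff] at h
    obtain ⟨m, hm⟩ := h
    exact hno ⟨m, fun i => congrFun hm i⟩
  obtain ⟨c, hc⟩ := CharacterModule.exists_character_apply_ne_zero_of_ne_zero hv
  let C : (Fin n → M) →+ AddCircle (1 : ℚ) := AddMonoidHom.comp c (QuotientAddGroup.mk' θ.range)
  let χ : Fin n → QFDual M := fun i => C.comp (AddMonoidHom.single (fun _ => M) i)
  have hC : ∀ w, C w = ∑ i, (χ i).ev (w i) := by
    intro w
    conv_lhs => rw [← Finset.univ_sum_single w]
    rw [map_sum]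
    rfl
  have hsum : ∑ i, op (b i : R) • χ i = 0 := by
    refine QFDual.ext_ev fun m => ?_
    have h1 : (∑ i, op (b i : R) • χ i).ev m = ∑ i, (op (b i : R) • χ i).ev m :=
      map_sum (qfEvalAt m) _ _
    have h2 : C (θ m) = 0 := by
      change c (QuotientAddGroup.mk (θ m)) = 0
      have h3 : (QuotientAddGroup.mk (θ m) : (Fin n → M) ⧸ θ.range) = 0 := by
        rw [QuotientAddGroup.eq_zero_iff]
        exact ⟨m, rfl⟩
      rw [h3]
      exact map_zero (show _ →+ _ from c)
    rw [h1, QFDual.ev_zero, ← h2, hC]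
    rfl
  obtain ⟨s, hs⟩ := hP
  have hcoef : ∀ ψ : QFDual M, ∑ i, unop (s (χ i) ψ) • b i = 0 := by
    intro ψ
    have h1 := congrArg (fun z => s z ψ) hsum
    simp only [map_sum, map_smul, map_zero, Finsupp.finsetSum_apply, Finsupp.smul_apply,
      Finsupp.zero_apply] at h1
    apply Subtype.ext
    have h2 := congrArg (opAddEquiv (α := R)).symm h1
    rw [map_sum] at h2
    simpa using h2
  apply hc
  change C _ = 0
  rw [hC]
  let F : Finset (QFDual M) := Finset.univ.biUnion fun i => (s (χ i)).support
  have hχ : ∀ i m, (χ i).ev m = ∑ ψ ∈ F, ψ.ev (unop (s (χ i) ψ) • m) := by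
    intro i m
    have h1 : χ i = ∑ ψ ∈ F, (s (χ i) ψ) • ψ := by
      conv_lhs => rw [← hs (χ i)]
      rw [Finsupp.linearCombination_apply, Finsupp.sum_of_support_subset]
      · rfl
      · exact Finset.subset_biUnion_of_mem (fun i => (s (χ i)).support) (Finset.mem_univ i)
      · intro j _; exact zero_smul _ _
    have h2 := congrArg (qfEvalAt m) h1
    rw [map_sum] at h2
    exact h2
  simp_rw [hχ]
  rw [Finset.sum_comm]
  refine Finset.sum_eq_zero fun ψ _ => ?_
  rw [← map_sum]
  have : ∑ i, unop (s (χ i) ψ) • f (b i) = 0 := by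
    rw [← map_zero f, ← hcoef ψ, map_sum]
    simp
  rw [this, map_zero]

end QFDualSec

section QFThree
variable {R : Type u} [Ring R]

theorem qf_free_minflat : IsMinFlat R (ℕ →₀ R) := by
  intro I _
  let β : (ℕ →₀ I) →+ TensorProduct ℤ I (ℕ →₀ R) := Finsupp.liftAddHom fun n =>
    { toFun := fun x => x ⊗ₜ[ℤ] Finsupp.single n 1
      map_zero' := TensorProduct.zero_tmul _ _
      map_add' := fun x y => TensorProduct.add_tmul _ _ _ }
  have hβ : ∀ n x, β (Finsupp.single n x) = x ⊗ₜ[ℤ] Finsupp.single n 1 := fun n x => by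
    simp [β]
  have key : ∀ t, ∃ h, t - β h ∈ minflatBalance R (ℕ →₀ R) I := by
    have hadd : ∀ t t', (∃ h, t - β h ∈ minflatBalance R (ℕ →₀ R) I) →
        (∃ h, t' - β h ∈ minflatBalance R (ℕ →₀ R) I) →
        (∃ h, (t + t') - β h ∈ minflatBalance R (ℕ →₀ R) I) := by
      rintro t t' ⟨h, hh⟩ ⟨h', hh'⟩
      refine ⟨h + h', ?_⟩
      rw [map_add, add_sub_add_comm]
      exact add_mem hh hh'
    have hz : ∃ h, 0 - β h ∈ minflatBalance R (ℕ →₀ R) I := ⟨0, by simp⟩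
    intro t
    induction t using TensorProduct.induction_on with
    | zero => exact hz
    | add t t' h h' => exact hadd t t' h h'
    | tmul x m =>
      induction m using Finsupp.induction_linear with
      | zero => rw [TensorProduct.tmul_zero]; exact hz
      | add m m' h h' => rw [TensorProduct.tmul_add]; exact hadd _ _ h h'
      | single n r =>
        refine ⟨Finsupp.single n (op r • x), ?_⟩
        rw [hβ, ← neg_mem_iff, neg_sub]
        refine Submodule.subset_span ⟨x, r, Finsupp.single n 1, ?_⟩
        rw [Finsupp.smul_single, smul_eq_mul, mul_one]
  rw [injective_iff_map_eq_zero]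
  intro q hq
  obtain ⟨t, rfl⟩ := Submodule.Quotient.mk_surjective _ q
  rw [Submodule.liftQ_apply] at hq
  obtain ⟨h, hh⟩ := key t
  have h1 := minflatBalance_le_ker R (ℕ →₀ R) I hh
  rw [LinearMap.mem_ker, map_sub, hq, zero_sub, neg_eq_zero] at h1
  have h2 : ∀ h : ℕ →₀ I, (minflatAux R (ℕ →₀ R) I) (β h) =
      h.mapRange (fun x : I => (x : R)) rfl := by
    intro h
    induction h using Finsupp.induction_linear with
    | zero => simp
    | add a b ha hb =>
      rw [map_add, map_add, ha, hb]
      ext n; simp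
    | single n x =>
      rw [hβ]
      change (x : R) • Finsupp.single n (1 : R) = _
      rw [Finsupp.smul_single, smul_eq_mul, mul_one, Finsupp.mapRange_single]
  have h3 : h = 0 := by
    ext n
    have h4 := (h2 h).symm.trans h1
    have h5 := DFunLike.congr_fun h4 n
    simpa using h5
  rw [h3, map_zero, sub_zero] at hh
  exact (Submodule.Quotient.mk_eq_zero _).mpr hh

theorem qf_three_acc (hF : Module.Injective R (ℕ →₀ R)) : QFAcc R := by
  rw [QFAcc, wellFounded_iff_isEmpty_descending_chain]
  refine ⟨?_⟩
  rintro ⟨X, hX⟩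
  let L : ℕ → Ideal R := fun n => qfLann (X n)
  have hL : StrictMono L := strictMono_nat_of_lt_succ hX
  have hx : ∀ n, ∃ y ∈ L (n + 1), ∃ x ∈ X n, y * x ≠ 0 := by
    intro n
    obtain ⟨y, hy, hyn⟩ := SetLike.exists_of_lt (hX n)
    rw [qf_mem_lann] at hyn
    push Not at hyn
    exact ⟨y, hy, hyn⟩
  choose y hy x hxX hyx using hx
  let U : Ideal R := ⨆ n, L n
  have hU : ∀ a, a ∈ U ↔ ∃ n, a ∈ L n := fun a =>
    Submodule.mem_iSup_of_directed L hL.monotone.directed_le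
  have hfin : ∀ a : U, (Function.support fun n => (a : R) * x n).Finite := by
    intro a
    obtain ⟨m, hm⟩ := (hU a).mp a.2
    refine (Set.finite_lt_nat m).subset fun n hn => ?_
    by_contra hnm
    apply hn
    have : (a : R) ∈ L n := hL.monotone (not_lt.mp hnm) hm
    exact (qf_mem_lann.mp this) (x n) (hxX n)
  let f : U →ₗ[R] (ℕ →₀ R) :=
    { toFun := fun a => Finsupp.ofSupportFinite (fun n => (a : R) * x n) (hfin a)
      map_add' := fun a b => by
        ext n
        exact add_mul _ _ _
      map_smul' := fun r a => by
        ext n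
        exact mul_assoc _ _ _ }
  obtain ⟨g, hg⟩ := Module.Baer.of_injective hF U f
  obtain ⟨n, hn⟩ := Infinite.exists_notMem_finset (g 1).support
  have hyU : y n ∈ U := (hU _).mpr ⟨n + 1, hy n⟩
  have h1 := DFunLike.congr_fun (hg (y n) hyU) n
  have h2 : g (y n) = y n • g 1 := by rw [← map_smul, smul_eq_mul, mul_one]
  rw [h2, Finsupp.smul_apply, Finsupp.notMem_support_iff.mp hn, smul_zero] at h1
  exact hyx n h1.symm

theorem qf_three_inj (hF : Module.Injective R (ℕ →₀ R)) : Module.Injective R R :=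
  qf_inj_retract hF (Finsupp.lsingle 0) (Finsupp.lapply 0) fun x => by simp

/-- `R` and its opposite, as right modules -/
def qfOpEquiv : R ≃ₗ[Rᵐᵒᵖ] Rᵐᵒᵖ :=
  { opAddEquiv (α := R) with
    map_smul' := fun _ _ => rfl }

theorem qf_one_two (hA : IsArtinianRing Rᵐᵒᵖ) (hI : Module.Injective Rᵐᵒᵖ Rᵐᵒᵖ)
    (M : Type u) [AddCommGroup M] [Module Rᵐᵒᵖ M] (hM : IsMininjective R M) :
    Module.Projective Rᵐᵒᵖ M := by
  obtain ⟨-, -, -, hK⟩ := qf_core hI qf_acc_of_noeth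
  refine qf_mininj_proj hI hK fun I hIa f => ?_
  let e : R ≃ₗ[Rᵐᵒᵖ] Rᵐᵒᵖ := qfOpEquiv
  let J : Submodule Rᵐᵒᵖ R := I.comap e.toLinearMap
  have hJ : IsAtom J := by
    have : J = (Submodule.orderIsoMapComap e).symm I := rfl
    rw [this]
    exact (OrderIso.isAtom_iff _ _).mpr hIa
  let r : J →ₗ[Rᵐᵒᵖ] I := e.toLinearMap.restrict fun x hx => hx
  obtain ⟨g, hg⟩ := hM J hJ (f ∘ₗ r)
  refine ⟨g ∘ₗ e.symm.toLinearMap, fun x => ?_⟩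
  have hx : e.symm (x : Rᵐᵒᵖ) ∈ J := by
    change e (e.symm (x : Rᵐᵒᵖ)) ∈ I
    rw [e.apply_symm_apply]
    exact x.2
  refine (hg ⟨_, hx⟩).trans ?_
  rw [LinearMap.comp_apply]
  congr 1

theorem qf_one_iff : (IsArtinian Rᵐᵒᵖ R ∧ Module.Injective Rᵐᵒᵖ R) ↔
    (IsArtinianRing Rᵐᵒᵖ ∧ Module.Injective Rᵐᵒᵖ Rᵐᵒᵖ) := by
  constructor
  · rintro ⟨h1, h2⟩
    exact ⟨(qfOpEquiv (R := R)).isArtinian_iff.mp h1,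
      qf_inj_retract h2 (qfOpEquiv (R := R)).symm.toLinearMap (qfOpEquiv (R := R)).toLinearMap
        fun x => (qfOpEquiv (R := R)).apply_symm_apply x⟩
  · rintro ⟨h1, h2⟩
    exact ⟨(qfOpEquiv (R := R)).isArtinian_iff.mpr h1,
      qf_inj_retract h2 (qfOpEquiv (R := R)).toLinearMap (qfOpEquiv (R := R)).symm.toLinearMap
        fun x => (qfOpEquiv (R := R)).symm_apply_apply x⟩

theorem qf_inj_mininj (M : Type u) [AddCommGroup M] [Module Rᵐᵒᵖ M]
    (hM : Module.Injective Rᵐᵒᵖ M) : IsMininjective R M := by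
  intro I _ f
  exact hM.out I.subtype I.injective_subtype f

end QFThree

/-- `R` is quasi-Frobenius iff every mininjective right `R`-module is
projective iff every min-flat left `R`-module is injective. -/
theorem quasiFrobenius_tfae (R : Type u) [Ring R] :
    List.TFAE
      [ IsArtinian Rᵐᵒᵖ R ∧ Module.Injective Rᵐᵒᵖ R,
        ∀ (M : Type u) [AddCommGroup M] [Module Rᵐᵒᵖ M],
          IsMininjective R M → Module.Projective Rᵐᵒᵖ M,
        ∀ (M : Type u) [AddCommGroup M] [Module R M],
          IsMinFlat R M → Module.Injective R M ] := by
  rw [qf_one_iff]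
  tfae_have 1 → 2 := fun h M _ _ hM => qf_one_two h.1 h.2 M hM
  tfae_have 2 → 1 := by
    intro h
    have hIP : ∀ (M : Type u) [AddCommGroup M] [Module Rᵐᵒᵖ M],
        Module.Injective Rᵐᵒᵖ M → Module.Projective Rᵐᵒᵖ M :=
      fun M _ _ hM => h M (qf_inj_mininj M hM)
    have hN := qf_chase hIP
    have hI := qf_selfinj hIP
    exact ⟨(qf_core hI qf_acc_of_noeth).1, hI⟩
  tfae_have 1 → 3 := by
    rintro ⟨hA, hI⟩ M _ _ hM
    obtain ⟨-, h2, -, -⟩ := qf_core hI qf_acc_of_noeth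
    have hN : IsNoetherianRing Rᵐᵒᵖᵐᵒᵖ := inferInstance
    have hN' : IsNoetherianRing R := isNoetherianRing_of_ringEquiv _ (RingEquiv.opOp R).symm
    exact qf_flat_inj (qf_one_two hA hI _ (qf_dual_mininj hM))
  tfae_have 3 → 1 := by
    intro h
    have hF := h _ (qf_free_minflat (R := R))
    obtain ⟨-, h2, h3, -⟩ := qf_core (qf_three_inj hF) (qf_three_acc hF)
    exact ⟨h2, h3⟩
  tfae_finish
end
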